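/- arXiv:1710.10921 — 3 statements merged into one kernel-verified Lean document; each statement's English description precedes it below -/
import Mathlib

section
/- Let δ > 0 and 0 < a < 1, assume p ≥ 2, and let Pen : 𝓜 → ℝ be a penalty satisfying Pen(M) ≥ (4σ²(δ+1)/(a ν_r²)) ‖Ψ_M‖_F² ln p for every M ∈ 𝓜. Let M̂ ∈ 𝓜 be any minimizer over 𝓜 of ‖z − f̂_M‖² + Pen(M). Then with probability at least 1 − √(2/π) p^{−δ}, one has ‖f̂_{M̂} − f‖² ≤ ((1+a)/(1−a)) · min_{M ∈ 𝓜} { ‖f_M − f‖² + ((a² + a + 4)/(2(1+a))) Pen(M) }. -/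
open MeasureTheory ProbabilityTheory Matrix Finset

noncomputable section

/-- Squared Euclidean norm of a vector in `ℝ^k`. -/
def sqnorm {k : ℕ} (v : Fin k → ℝ) : ℝ := ∑ i, v i ^ 2

/-- Euclidean inner product on `ℝ^k`. -/
def ip {k : ℕ} (u v : Fin k → ℝ) : ℝ := ∑ i, u i * v i

/-- The `j`-th column of a matrix. -/
def colv {a b : ℕ} (B : Matrix (Fin a) (Fin b) ℝ) (j : Fin b) : Fin a → ℝ := fun i => B i j

/-- The matrix `B_M`: the columns of `B` outside `M` are replaced by zero. -/
def restr {a b : ℕ} (B : Matrix (Fin a) (Fin b) ℝ) (M : Finset (Fin b)) :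
    Matrix (Fin a) (Fin b) ℝ := fun i j => if j ∈ M then B i j else 0

/-- Squared Frobenius norm of a matrix. -/
def frob2 {a b : ℕ} (B : Matrix (Fin a) (Fin b) ℝ) : ℝ := ∑ j, sqnorm (colv B j)

/-- `x` has at most `r` nonzero coordinates. -/
def sparse {k : ℕ} (r : ℕ) (x : Fin k → ℝ) : Prop := (Function.support x).ncard ≤ r

/-- `H` is the orthogonal projection matrix of `ℝ^m` onto `span{φ_j : j ∈ M}`:
symmetric, idempotent, with range equal to the span of the columns of `Φ` indexed by `M`. -/
def IsProjOnto {m p : ℕ} (Φ : Matrix (Fin m) (Fin p) ℝ) (M : Finset (Fin p))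
    (H : Matrix (Fin m) (Fin m) ℝ) : Prop :=
  H.IsSymm ∧ H * H = H ∧
    LinearMap.range H.mulVecLin = Submodule.span ℝ (colv Φ '' (M : Set (Fin p)))

/-- `Ψ = A (AᵀA)⁻¹ Φ`. -/
def Psi {n m p : ℕ} (A : Matrix (Fin n) (Fin m) ℝ) (Φ : Matrix (Fin m) (Fin p) ℝ) :
    Matrix (Fin n) (Fin p) ℝ := A * (Aᵀ * A)⁻¹ * Φ

/-- `z = (AᵀA)⁻¹ Aᵀ y` where `y = A f + σ e`. -/
def zv {n m : ℕ} (A : Matrix (Fin n) (Fin m) ℝ) (f : Fin m → ℝ) (σ : ℝ) (e : Fin n → ℝ) :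
    Fin m → ℝ := ((Aᵀ * A)⁻¹ * Aᵀ).mulVec (A.mulVec f + σ • e)

/-- `ξ = (AᵀA)⁻¹ Aᵀ e`. -/
def xiv {n m : ℕ} (A : Matrix (Fin n) (Fin m) ℝ) (e : Fin n → ℝ) : Fin m → ℝ :=
  ((Aᵀ * A)⁻¹ * Aᵀ).mulVec e

/-- The collection `𝓜` of models of size at most `r/2`. -/
def models (p r : ℕ) : Finset (Finset (Fin p)) := Finset.univ.filter fun M => 2 * M.card ≤ r

open scoped Classical in
/-- The restricted collection `𝓜_γ = {M ∈ 𝓜 : ‖Ψ_M‖_F² ≤ γ²n}`. -/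
def modelsG {n m p : ℕ} (r : ℕ) (A : Matrix (Fin n) (Fin m) ℝ) (Φ : Matrix (Fin m) (Fin p) ℝ)
    (γ : ℝ) : Finset (Finset (Fin p)) :=
  Finset.univ.filter fun M => 2 * M.card ≤ r ∧ frob2 (restr (Psi A Φ) M) ≤ γ ^ 2 * (n : ℝ)

/-- The aggregated estimator `f̂_θ = ∑_{M ∈ C} θ_M f̂_M`, where `f̂_M = H_M z`. -/
def aggEst {m p : ℕ} (C : Finset (Finset (Fin p)))
    (H : Finset (Fin p) → Matrix (Fin m) (Fin m) ℝ) (zvec : Fin m → ℝ)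
    (θ : Finset (Fin p) → ℝ) : Fin m → ℝ :=
  ∑ M ∈ C, θ M • (H M).mulVec zvec

/-- The penalty `U_M = 4σ²(δ+1)ν_r⁻² ‖Ψ_M‖_F² ln p`. -/
def Ufun {n m p : ℕ} (A : Matrix (Fin n) (Fin m) ℝ) (Φ : Matrix (Fin m) (Fin p) ℝ)
    (σ δ ν2 : ℝ) (M : Finset (Fin p)) : ℝ :=
  4 * σ ^ 2 * (δ + 1) / ν2 * frob2 (restr (Psi A Φ) M) * Real.log p

/-- The Q-aggregation criterion (with `α = 1/2`, multiplied by 2):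
`∑_M θ_M (‖z - f̂_M‖² + 2U_M) + ‖z - f̂_θ‖²`. -/
def aggCrit {m p : ℕ} (C : Finset (Finset (Fin p)))
    (H : Finset (Fin p) → Matrix (Fin m) (Fin m) ℝ) (zvec : Fin m → ℝ)
    (U : Finset (Fin p) → ℝ) (θ : Finset (Fin p) → ℝ) : ℝ :=
  ∑ M ∈ C, θ M * (sqnorm (zvec - (H M).mulVec zvec) + 2 * U M) +
    sqnorm (zvec - aggEst C H zvec θ)


lemma gauss_tail_one {t : ℝ} (ht : 1 ≤ t) :
    gaussianReal 0 1 (Set.Ioi t) ≤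
      ENNReal.ofReal ((Real.sqrt (2 * Real.pi))⁻¹ * Real.exp (-t ^ 2 / 2)) := by
  have hderiv : ∀ x ∈ Set.Ici t, HasDerivAt
      (fun x : ℝ => -((Real.sqrt (2 * Real.pi))⁻¹ * Real.exp (-x ^ 2 / 2)))
      (x * ((Real.sqrt (2 * Real.pi))⁻¹ * Real.exp (-x ^ 2 / 2))) x := by
    intro x _
    have h1 : HasDerivAt (fun x : ℝ => -x ^ 2 / 2) (-x) x := by
      have := ((hasDerivAt_pow 2 x).neg).div_const 2
      refine this.congr_deriv ?_
      push_cast; ring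
    have := ((h1.exp).const_mul ((Real.sqrt (2 * Real.pi))⁻¹)).neg
    refine this.congr_deriv ?_
    ring
  have hpos : ∀ x ∈ Set.Ioi t,
      0 ≤ x * ((Real.sqrt (2 * Real.pi))⁻¹ * Real.exp (-x ^ 2 / 2)) := by
    intro x hx
    have : 0 ≤ x := by have : t < x := hx; linarith
    positivity
  have hlim : Filter.Tendsto
      (fun x : ℝ => -((Real.sqrt (2 * Real.pi))⁻¹ * Real.exp (-x ^ 2 / 2)))
      Filter.atTop (nhds 0) := by
    have h2 : Filter.Tendsto (fun x : ℝ => -x ^ 2 / 2) Filter.atTop Filter.atBot := by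
      have h3 : Filter.Tendsto (fun x : ℝ => x ^ 2 / 2) Filter.atTop Filter.atTop :=
        (Filter.tendsto_pow_atTop (two_ne_zero)).atTop_div_const (by norm_num)
      have := Filter.tendsto_neg_atTop_atBot.comp h3
      refine this.congr (fun x => ?_)
      simp only [Function.comp]; ring
    have := ((Real.tendsto_exp_atBot.comp h2).const_mul ((Real.sqrt (2 * Real.pi))⁻¹)).neg
    simpa using this
  have hint := integrableOn_Ioi_deriv_of_nonneg' hderiv hpos hlim
  have hval := integral_Ioi_of_hasDerivAt_of_nonneg' hderiv hpos hlim
  rw [gaussianReal_apply_eq_integral 0 one_ne_zero]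
  apply ENNReal.ofReal_le_ofReal
  calc ∫ x in Set.Ioi t, gaussianPDFReal 0 1 x
      ≤ ∫ x in Set.Ioi t, x * ((Real.sqrt (2 * Real.pi))⁻¹ * Real.exp (-x ^ 2 / 2)) := by
        apply setIntegral_mono_on (integrable_gaussianPDFReal 0 1).integrableOn hint
          measurableSet_Ioi
        intro x hx
        have hx' : 1 ≤ x := by have : t < x := hx; linarith
        simp only [gaussianPDFReal, NNReal.coe_one, mul_one, sub_zero]
        apply le_mul_of_one_le_left _ hx'
        positivity
    _ = _ := by rw [hval]; ring

lemma gauss_tail_abs {t : ℝ} (ht : 1 ≤ t) :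
    gaussianReal 0 1 {x | t < |x|} ≤
      ENNReal.ofReal (Real.sqrt (2 / Real.pi) * Real.exp (-t ^ 2 / 2)) := by
  have hsub : {x : ℝ | t < |x|} = Set.Ioi t ∪ (fun x => -x) ⁻¹' (Set.Ioi t) := by
    ext x
    simp only [lt_abs, Set.mem_ofPred_eq, Set.mem_union, Set.mem_Ioi, Set.mem_preimage]
  have hneg : gaussianReal 0 1 ((fun x => -x) ⁻¹' (Set.Ioi t)) = gaussianReal 0 1 (Set.Ioi t) := by
    rw [← Measure.map_apply measurable_neg measurableSet_Ioi]
    have := gaussianReal_map_neg (μ := 0) (v := 1)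
    rw [this]; simp
  rw [hsub]
  refine (measure_union_le _ _).trans ?_
  rw [hneg]
  refine (add_le_add (gauss_tail_one ht) (gauss_tail_one ht)).trans ?_
  rw [← ENNReal.ofReal_add (by positivity) (by positivity)]
  apply ENNReal.ofReal_le_ofReal
  have : Real.sqrt (2 / Real.pi) = 2 * (Real.sqrt (2 * Real.pi))⁻¹ := by
    rw [Real.sqrt_eq_iff_mul_self_eq (by positivity) (by positivity)]
    have h := Real.sq_sqrt (show 0 ≤ 2 * Real.pi by positivity)
    have h0 : Real.sqrt (2 * Real.pi) ≠ 0 := by positivity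
    have hpi := Real.pi_ne_zero
    field_simp
    nlinarith
  rw [this]
  apply le_of_eq; ring

lemma gauss_map_ip {n : ℕ} (w : Fin n → ℝ) :
    (Measure.pi fun _ : Fin n => gaussianReal 0 1).map (fun x => ip w x) =
      gaussianReal 0 (sqnorm w).toNNReal := by
  have h1 := IsGaussian.map_eq_gaussianReal (μ := stdGaussian (EuclideanSpace ℝ (Fin n)))
    (innerSL ℝ (WithLp.toLp 2 w))
  rw [integral_strongDual_stdGaussian, variance_dual_stdGaussian, ← map_pi_eq_stdGaussian,
    Measure.map_map (by fun_prop) (by fun_prop)] at h1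
  have h2 : (⇑(innerSL ℝ (WithLp.toLp 2 w)) ∘ WithLp.toLp 2) = fun x : Fin n → ℝ => ip w x := by
    ext x
    simp [ip, PiLp.inner_apply, mul_comm]
  rw [h2] at h1
  rw [h1]
  congr 2
  simp [innerSL_apply_norm, EuclideanSpace.norm_sq_eq, sqnorm]

lemma gauss_tail_ip {n : ℕ} (w : Fin n → ℝ) {t : ℝ} (ht : 1 ≤ t) :
    (Measure.pi fun _ : Fin n => gaussianReal 0 1) {x | t * Real.sqrt (sqnorm w) < |ip w x|} ≤
      ENNReal.ofReal (Real.sqrt (2 / Real.pi) * Real.exp (-t ^ 2 / 2)) := by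
  have hw : 0 ≤ sqnorm w := Finset.sum_nonneg fun i _ => sq_nonneg _
  have hmeas : MeasurableSet {x : ℝ | t * Real.sqrt (sqnorm w) < |x|} :=
    measurableSet_lt measurable_const (by fun_prop)
  have hm : Measurable (fun x : Fin n → ℝ => ip w x) := by
    unfold ip; fun_prop
  have h1 : (Measure.pi fun _ : Fin n => gaussianReal 0 1)
      {x | t * Real.sqrt (sqnorm w) < |ip w x|} =
      gaussianReal 0 (sqnorm w).toNNReal {x : ℝ | t * Real.sqrt (sqnorm w) < |x|} := by
    rw [← gauss_map_ip, Measure.map_apply hm hmeas]; rfl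
  have h2 : gaussianReal 0 (sqnorm w).toNNReal =
      (gaussianReal 0 1).map (fun x => Real.sqrt (sqnorm w) * x) := by
    rw [gaussianReal_map_const_mul]
    congr 1
    · simp
    · ext; simp [Real.sq_sqrt hw, hw]
  rw [h1, h2, Measure.map_apply (by fun_prop) hmeas]
  refine le_trans (measure_mono ?_) (gauss_tail_abs ht)
  intro x hx
  simp only [Set.mem_preimage, Set.mem_ofPred_eq, abs_mul, abs_of_nonneg (Real.sqrt_nonneg _)] at hx ⊢
  by_contra hcon
  push Not at hcon
  nlinarith [mul_le_mul_of_nonneg_left hcon (Real.sqrt_nonneg (sqnorm w))]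

lemma sqnorm_eq_dot {k : ℕ} (v : Fin k → ℝ) : sqnorm v = v ⬝ᵥ v := by
  simp [sqnorm, dotProduct, pow_two]

lemma sqnorm_nonneg' {k : ℕ} (v : Fin k → ℝ) : 0 ≤ sqnorm v :=
  Finset.sum_nonneg fun i _ => sq_nonneg _

lemma proj_best {m p : ℕ} {Φ : Matrix (Fin m) (Fin p) ℝ} {M : Finset (Fin p)}
    {H : Matrix (Fin m) (Fin m) ℝ} (hH : IsProjOnto Φ M H) (z f : Fin m → ℝ) :
    sqnorm (z - H.mulVec z) ≤ sqnorm (z - H.mulVec f) := by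
  obtain ⟨hs, hi, -⟩ := hH
  have h1 : z - H.mulVec f = (z - H.mulVec z) + H.mulVec (z - f) := by
    rw [Matrix.mulVec_sub]; abel
  have h2 : (z - H.mulVec z) ⬝ᵥ H.mulVec (z - f) = 0 := by
    rw [Matrix.dotProduct_mulVec, ← Matrix.mulVec_transpose, hs.eq, Matrix.mulVec_sub,
      Matrix.mulVec_mulVec, hi, sub_self, zero_dotProduct]
  have h3 := sqnorm_nonneg' (H.mulVec (z - f))
  rw [h1]
  simp only [sqnorm_eq_dot] at h3 ⊢
  rw [add_dotProduct, dotProduct_add, dotProduct_add, h2,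
    dotProduct_comm (H.mulVec (z - f)) (z - H.mulVec z), h2]
  linarith

lemma proj_repr {m p : ℕ} {Φ : Matrix (Fin m) (Fin p) ℝ} {M : Finset (Fin p)}
    {H : Matrix (Fin m) (Fin m) ℝ} (hH : IsProjOnto Φ M H) (z : Fin m → ℝ) :
    ∃ x : Fin p → ℝ, (∀ j, j ∉ M → x j = 0) ∧ H.mulVec z = Φ.mulVec x := by
  obtain ⟨-, -, hr⟩ := hH
  have h1 : H.mulVec z ∈ Submodule.span ℝ (colv Φ '' (M : Set (Fin p))) := by
    rw [← hr]; exact ⟨z, rfl⟩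
  rw [Submodule.mem_span_image_finset_iff_exists_fun'] at h1
  obtain ⟨c, hc⟩ := h1
  refine ⟨fun j => if j ∈ M then c j else 0, fun j hj => by simp [hj], ?_⟩
  rw [← hc]
  ext i
  simp [Matrix.mulVec, dotProduct, colv, Finset.sum_apply, mul_comm]

lemma zv_eq {n m : ℕ} (A : Matrix (Fin n) (Fin m) ℝ) (hrank : A.rank = m) (f : Fin m → ℝ)
    (σ : ℝ) (e : Fin n → ℝ) : zv A f σ e = f + σ • xiv A e := by
  have hu : IsUnit (Aᵀ * A) := by
    rw [← Matrix.linearIndependent_cols_iff_isUnit, linearIndependent_iff_card_eq_finrank_span,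
      Set.finrank, ← Matrix.rank_eq_finrank_span_cols]
    rw [Matrix.rank_transpose_mul_self, hrank]; simp
  rw [Matrix.isUnit_iff_isUnit_det] at hu
  unfold zv xiv
  rw [Matrix.mulVec_add, Matrix.mulVec_smul, Matrix.mulVec_mulVec, Matrix.mul_assoc,
    Matrix.nonsing_inv_mul _ hu, Matrix.one_mulVec]

lemma dot_xiv {n m p : ℕ} (A : Matrix (Fin n) (Fin m) ℝ) (Φ : Matrix (Fin m) (Fin p) ℝ)
    (e : Fin n → ℝ) (x : Fin p → ℝ) :
    xiv A e ⬝ᵥ Φ.mulVec x = ∑ j, x j * ip (colv (Psi A Φ) j) e := by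
  have h1 : ((Aᵀ * A)⁻¹ * Aᵀ) = (A * (Aᵀ * A)⁻¹)ᵀ := by
    rw [Matrix.transpose_mul, Matrix.transpose_nonsing_inv, Matrix.transpose_mul,
      Matrix.transpose_transpose]
  have h2 : ∀ j, ip (colv (Psi A Φ) j) e = ((Psi A Φ)ᵀ.mulVec e) j := by
    intro j; simp [ip, colv, Matrix.mulVec, dotProduct]
  simp only [h2]
  change _ = x ⬝ᵥ (Psi A Φ)ᵀ.mulVec e
  unfold xiv Psi
  rw [h1, Matrix.mulVec_transpose, ← Matrix.dotProduct_mulVec, Matrix.mulVec_mulVec,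
    Matrix.dotProduct_mulVec x, ← Matrix.mulVec_transpose, Matrix.transpose_transpose,
    dotProduct_comm]

lemma frob2_restr {a b : ℕ} (B : Matrix (Fin a) (Fin b) ℝ) (M : Finset (Fin b)) :
    frob2 (restr B M) = ∑ j ∈ M, sqnorm (colv B j) := by
  unfold frob2
  rw [← Finset.sum_subset (Finset.subset_univ M)]
  · refine Finset.sum_congr rfl fun j hj => ?_
    simp [sqnorm, colv, restr, hj]
  · intro j _ hj
    simp [sqnorm, colv, restr, hj]

lemma noise_bound {n m p r : ℕ} (A : Matrix (Fin n) (Fin m) ℝ) (Φ : Matrix (Fin m) (Fin p) ℝ)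
    (ν2 : ℝ) (hν2 : 0 < ν2)
    (hν2min : ∀ x : Fin p → ℝ, x ≠ 0 → sparse r x → ν2 * sqnorm x ≤ sqnorm (Φ.mulVec x))
    (e : Fin n → ℝ) (t : ℝ)
    (he : ∀ j, |ip (colv (Psi A Φ) j) e| ≤ t * Real.sqrt (sqnorm (colv (Psi A Φ) j)))
    (M M' : Finset (Fin p)) (hM : M ∈ models p r) (hM' : M' ∈ models p r)
    (x : Fin p → ℝ) (hx : ∀ j, j ∉ M ∪ M' → x j = 0) :
    ν2 * (xiv A e ⬝ᵥ Φ.mulVec x) ^ 2 ≤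
      sqnorm (Φ.mulVec x) * (t ^ 2 *
        (frob2 (restr (Psi A Φ) M) + frob2 (restr (Psi A Φ) M'))) := by
  have hsp : sparse r x := by
    simp only [models, Finset.mem_filter, Finset.mem_univ, true_and] at hM hM'
    have h1 : Function.support x ⊆ ((M ∪ M' : Finset (Fin p)) : Set (Fin p)) := by
      intro j hj
      by_contra hcon
      exact hj (hx j (by simpa using hcon))
    have h2 := Set.ncard_le_ncard h1 (Finset.finite_toSet _)
    rw [Set.ncard_coe_finset] at h2
    have h3 := Finset.card_union_le M M'
    unfold sparse
    omega
  have hx2 : ν2 * sqnorm x ≤ sqnorm (Φ.mulVec x) := by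
    by_cases h0 : x = 0
    · subst h0; simp [sqnorm]
    · exact hν2min x h0 hsp
  have hdot : xiv A e ⬝ᵥ Φ.mulVec x = ∑ j ∈ M ∪ M', x j * ip (colv (Psi A Φ) j) e := by
    rw [dot_xiv]
    symm
    apply Finset.sum_subset (Finset.subset_univ _)
    intro j _ hj
    rw [hx j hj, zero_mul]
  have hcs := Finset.sum_mul_sq_le_sq_mul_sq (M ∪ M') x (fun j => ip (colv (Psi A Φ) j) e)
  have hA : ∑ j ∈ M ∪ M', x j ^ 2 ≤ sqnorm x := by
    unfold sqnorm
    exact Finset.sum_le_sum_of_subset_of_nonneg (Finset.subset_univ _) fun i _ _ => sq_nonneg _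
  have hB : ∑ j ∈ M ∪ M', (ip (colv (Psi A Φ) j) e) ^ 2 ≤ t ^ 2 *
        (frob2 (restr (Psi A Φ) M) + frob2 (restr (Psi A Φ) M')) := by
    rw [frob2_restr, frob2_restr, ← Finset.sum_union_inter, mul_add, Finset.mul_sum]
    have h1 : ∑ j ∈ M ∪ M', (ip (colv (Psi A Φ) j) e) ^ 2 ≤
        ∑ j ∈ M ∪ M', t ^ 2 * sqnorm (colv (Psi A Φ) j) := by
      refine Finset.sum_le_sum fun j _ => ?_
      have h := pow_le_pow_left₀ (abs_nonneg _) (he j) 2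
      rwa [sq_abs, mul_pow, Real.sq_sqrt (sqnorm_nonneg' _)] at h
    have h2 : 0 ≤ t ^ 2 * ∑ j ∈ M ∩ M', sqnorm (colv (Psi A Φ) j) :=
      mul_nonneg (sq_nonneg _) (Finset.sum_nonneg fun j _ => sqnorm_nonneg' _)
    linarith
  have hB0 : 0 ≤ ∑ j ∈ M ∪ M', (ip (colv (Psi A Φ) j) e) ^ 2 :=
    Finset.sum_nonneg fun j _ => sq_nonneg _
  rw [hdot]
  calc ν2 * (∑ j ∈ M ∪ M', x j * ip (colv (Psi A Φ) j) e) ^ 2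
      ≤ ν2 * ((∑ j ∈ M ∪ M', x j ^ 2) * ∑ j ∈ M ∪ M', (ip (colv (Psi A Φ) j) e) ^ 2) :=
        mul_le_mul_of_nonneg_left hcs hν2.le
    _ ≤ ν2 * (sqnorm x * ∑ j ∈ M ∪ M', (ip (colv (Psi A Φ) j) e) ^ 2) := by gcongr
    _ = (ν2 * sqnorm x) * ∑ j ∈ M ∪ M', (ip (colv (Psi A Φ) j) e) ^ 2 := by ring
    _ ≤ _ := mul_le_mul hx2 hB hB0 (sqnorm_nonneg' _)

lemma young {I u K a σ : ℝ} (ha : 0 < a) (hu : 0 ≤ u) (hK : 0 ≤ K) (h : I ^ 2 ≤ u * K) :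
    2 * σ * I ≤ a / 2 * u + 2 / a * σ ^ 2 * K := by
  have h1 : |2 * σ * I| ≤ a / 2 * u + 2 / a * σ ^ 2 * K := by
    apply abs_le_of_sq_le_sq _ (by positivity)
    have h2 : (a / 2 * u + 2 / a * σ ^ 2 * K) ^ 2 =
        (a / 2 * u - 2 / a * σ ^ 2 * K) ^ 2 + 4 * σ ^ 2 * (u * K) := by
      field_simp; ring
    have h3 : 4 * σ ^ 2 * I ^ 2 ≤ 4 * σ ^ 2 * (u * K) := by gcongr
    nlinarith [sq_nonneg (a / 2 * u - 2 / a * σ ^ 2 * K)]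
  exact (le_abs_self _).trans h1

lemma sqnorm_sub_le {k : ℕ} (u v w : Fin k → ℝ) :
    sqnorm (u - v) ≤ 2 * (sqnorm (u - w) + sqnorm (v - w)) := by
  unfold sqnorm
  rw [← Finset.sum_add_distrib, Finset.mul_sum]
  refine Finset.sum_le_sum fun i _ => ?_
  simp only [Pi.sub_apply]
  nlinarith [sq_nonneg (u i - w i + (v i - w i))]

lemma sqnorm_expand {k : ℕ} (f ξ g : Fin k → ℝ) (σ : ℝ) :
    sqnorm (f + σ • ξ - g) =
      sqnorm (g - f) + 2 * σ * (ξ ⬝ᵥ f) - 2 * σ * (ξ ⬝ᵥ g) + σ ^ 2 * sqnorm ξ := by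
  unfold sqnorm dotProduct
  rw [Finset.mul_sum, Finset.mul_sum, Finset.mul_sum, ← Finset.sum_add_distrib,
    ← Finset.sum_sub_distrib, ← Finset.sum_add_distrib]
  refine Finset.sum_congr rfl fun i _ => ?_
  simp only [Pi.sub_apply, Pi.add_apply, Pi.smul_apply, smul_eq_mul]
  ring

lemma det_part
    {n m p r : ℕ} (hp : 2 ≤ p)
    (A : Matrix (Fin n) (Fin m) ℝ) (hrank : A.rank = m)
    (Φ : Matrix (Fin m) (Fin p) ℝ)
    (σ : ℝ) (δ : ℝ) (hδ : 0 < δ) (a : ℝ) (ha0 : 0 < a) (ha1 : a < 1)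
    (ν2 : ℝ) (hν2 : 0 < ν2)
    (hν2min : ∀ x : Fin p → ℝ, x ≠ 0 → sparse r x → ν2 * sqnorm x ≤ sqnorm (Φ.mulVec x))
    (H : Finset (Fin p) → Matrix (Fin m) (Fin m) ℝ)
    (hH : ∀ M : Finset (Fin p), IsProjOnto Φ M (H M))
    (e : Fin n → ℝ) (f : Fin m → ℝ)
    (Pen : Finset (Fin p) → ℝ)
    (hPen : ∀ M ∈ models p r,
      4 * σ ^ 2 * (δ + 1) / (a * ν2) * frob2 (restr (Psi A Φ) M) * Real.log p ≤ Pen M)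
    (M' : Finset (Fin p)) (hM' : M' ∈ models p r)
    (hmin : ∀ M ∈ models p r,
      sqnorm (zv A f σ e - (H M').mulVec (zv A f σ e)) + Pen M' ≤
        sqnorm (zv A f σ e - (H M).mulVec (zv A f σ e)) + Pen M)
    (t : ℝ) (ht : t ^ 2 = 2 * (δ + 1) * Real.log p)
    (he : ∀ j, |ip (colv (Psi A Φ) j) e| ≤ t * Real.sqrt (sqnorm (colv (Psi A Φ) j)))
    (M : Finset (Fin p)) (hM : M ∈ models p r) :
    sqnorm ((H M').mulVec (zv A f σ e) - f) ≤
          (1 + a) / (1 - a) *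
            (sqnorm ((H M).mulVec f - f) + (a ^ 2 + a + 4) / (2 * (1 + a)) * Pen M) := by
  have hlog : 0 ≤ Real.log p := Real.log_natCast_nonneg p
  have hF : ∀ M, 0 ≤ frob2 (restr (Psi A Φ) M) := fun M =>
    Finset.sum_nonneg fun j _ => sqnorm_nonneg' _
  have hPM : 0 ≤ Pen M := by
    refine le_trans ?_ (hPen M hM)
    have := hF M
    positivity
  obtain ⟨x', hx', hx'e⟩ := proj_repr (hH M') (zv A f σ e)
  obtain ⟨x, hx, hxe⟩ := proj_repr (hH M) f
  have h1 := (hmin M hM).trans (add_le_add_left (proj_best (hH M) (zv A f σ e) f) (Pen M))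
  set g' := (H M').mulVec (zv A f σ e) with hg'
  set g := (H M).mulVec f with hg
  rw [zv_eq A hrank, sqnorm_expand, sqnorm_expand] at h1
  have hdiff : g' - g = Φ.mulVec (x' - x) := by rw [Matrix.mulVec_sub, ← hx'e, ← hxe]
  have h2 := noise_bound A Φ ν2 hν2 hν2min e t he M M' hM hM' (x' - x) (by
    intro j hj
    simp only [Finset.mem_union, not_or] at hj
    simp [hx j hj.1, hx' j hj.2])
  rw [← hdiff] at h2
  have h3 : (xiv A e ⬝ᵥ (g' - g)) ^ 2 ≤ sqnorm (g' - g) * (t ^ 2 *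
        (frob2 (restr (Psi A Φ) M) + frob2 (restr (Psi A Φ) M')) / ν2) := by
    rw [← mul_div_assoc, le_div_iff₀ hν2]; linarith
  have h4 := young (σ := σ) ha0 (sqnorm_nonneg' _) (by
    have := hF M; have := hF M'; positivity) h3
  have h5 := sqnorm_sub_le g' g f
  have h6 : 2 / a * σ ^ 2 * (t ^ 2 *
        (frob2 (restr (Psi A Φ) M) + frob2 (restr (Psi A Φ) M')) / ν2) ≤ Pen M + Pen M' := by
    refine le_trans (le_of_eq ?_) (add_le_add (hPen M hM) (hPen M' hM'))
    rw [ht]; field_simp; ring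
  rw [dotProduct_sub, mul_sub] at h4
  have h7 : a / 2 * sqnorm (g' - g) ≤ a * (sqnorm (g' - f) + sqnorm (g - f)) := by
    nlinarith
  have h8 : (1 - a) * sqnorm (g' - f) ≤ (1 + a) * sqnorm (g - f) + 2 * Pen M := by
    linarith
  have h9 : (1 + a) / (1 - a) *
            (sqnorm (g - f) + (a ^ 2 + a + 4) / (2 * (1 + a)) * Pen M) =
      ((1 + a) * sqnorm (g - f) + (a ^ 2 + a + 4) / 2 * Pen M) / (1 - a) := by
    have : 1 - a ≠ 0 := by linarith
    field_simp
  rw [h9, le_div_iff₀ (by linarith)]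
  nlinarith [mul_nonneg (show 0 ≤ a ^ 2 + a by positivity) hPM]

/-- Theorem 1, part 1 (oracle inequality with high probability for the penalized
empirical risk model-selection estimator). -/
theorem oracle_model_selection_high_probability
    {n m p r : ℕ} (hp : 2 ≤ p) (hmn : m ≤ n)
    (A : Matrix (Fin n) (Fin m) ℝ) (hrank : A.rank = m)
    (Φ : Matrix (Fin m) (Fin p) ℝ) (hΦnorm : ∀ j, sqnorm (colv Φ j) = 1)
    (σ : ℝ) (hσ : 0 < σ) (δ : ℝ) (hδ : 0 < δ) (a : ℝ) (ha0 : 0 < a) (ha1 : a < 1)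
    (ν2 : ℝ) (hν2 : 0 < ν2)
    (hν2min : ∀ x : Fin p → ℝ, x ≠ 0 → sparse r x → ν2 * sqnorm x ≤ sqnorm (Φ.mulVec x))
    (H : Finset (Fin p) → Matrix (Fin m) (Fin m) ℝ)
    (hH : ∀ M : Finset (Fin p), IsProjOnto Φ M (H M))
    {Ω : Type*} [MeasurableSpace Ω] (μ : Measure Ω) [IsProbabilityMeasure μ]
    (ε : Ω → Fin n → ℝ) (hεmeas : Measurable ε)
    (hεdist : Measure.map ε μ = Measure.pi fun _ : Fin n => gaussianReal 0 1)
    (f : Fin m → ℝ)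
    (Pen : Finset (Fin p) → ℝ)
    (hPen : ∀ M ∈ models p r,
      4 * σ ^ 2 * (δ + 1) / (a * ν2) * frob2 (restr (Psi A Φ) M) * Real.log p ≤ Pen M)
    (Mhat : Ω → Finset (Fin p))
    (hMhatMem : ∀ ω, Mhat ω ∈ models p r)
    (hMhatMin : ∀ ω, ∀ M ∈ models p r,
      sqnorm (zv A f σ (ε ω) - (H (Mhat ω)).mulVec (zv A f σ (ε ω))) + Pen (Mhat ω) ≤
        sqnorm (zv A f σ (ε ω) - (H M).mulVec (zv A f σ (ε ω))) + Pen M) :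
    ENNReal.ofReal (1 - Real.sqrt (2 / Real.pi) * (p : ℝ) ^ (-δ)) ≤
      μ {ω | ∀ M ∈ models p r,
        sqnorm ((H (Mhat ω)).mulVec (zv A f σ (ε ω)) - f) ≤
          (1 + a) / (1 - a) *
            (sqnorm ((H M).mulVec f - f) + (a ^ 2 + a + 4) / (2 * (1 + a)) * Pen M)} := by
  have hp' : (2 : ℝ) ≤ p := by exact_mod_cast hp
  have hp0 : (0 : ℝ) < p := by linarith
  have hlog2 : (1 / 2 : ℝ) ≤ Real.log p := by
    have h1 := Real.log_le_log (by norm_num) hp'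
    have h2 := Real.log_two_gt_d9
    linarith
  have hnn : 0 ≤ 2 * (δ + 1) * Real.log p := by positivity
  set t := Real.sqrt (2 * (δ + 1) * Real.log p) with htdef
  have ht2 : t ^ 2 = 2 * (δ + 1) * Real.log p := Real.sq_sqrt hnn
  have ht1 : 1 ≤ t := by
    rw [htdef, Real.one_le_sqrt]
    nlinarith
  have hipm : ∀ w : Fin n → ℝ, Measurable (fun x : Fin n → ℝ => ip w x) := by
    intro w; unfold ip; fun_prop
  set B : Fin p → Set (Fin n → ℝ) := fun j =>
    {x | t * Real.sqrt (sqnorm (colv (Psi A Φ) j)) < |ip (colv (Psi A Φ) j) x|} with hB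
  have hBm : ∀ j, MeasurableSet (B j) := fun j =>
    measurableSet_lt measurable_const (by
      have := hipm (colv (Psi A Φ) j)
      exact measurable_abs.comp this)
  have hUm : MeasurableSet (⋃ j, B j) := MeasurableSet.iUnion hBm
  have hbad : μ (ε ⁻¹' (⋃ j, B j)) ≤
      ENNReal.ofReal (Real.sqrt (2 / Real.pi) * (p : ℝ) ^ (-δ)) := by
    rw [← Measure.map_apply hεmeas hUm, hεdist]
    refine (measure_iUnion_fintype_le _ _).trans ?_
    refine (Finset.sum_le_sum fun j _ => gauss_tail_ip (colv (Psi A Φ) j) ht1).trans ?_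
    rw [Finset.sum_const, Finset.card_univ, Fintype.card_fin, nsmul_eq_mul,
      ← ENNReal.ofReal_natCast, ← ENNReal.ofReal_mul (by positivity)]
    apply ENNReal.ofReal_le_ofReal
    apply le_of_eq
    rw [ht2, Real.rpow_def_of_pos hp0]
    have h1 : Real.exp (-(2 * (δ + 1) * Real.log p) / 2) =
        Real.exp (Real.log p * -δ) * (p : ℝ)⁻¹ := by
      rw [← Real.exp_log (inv_pos.mpr hp0), ← Real.exp_add, Real.log_inv]
      congr 1; ring
    rw [h1]
    field_simp
  have hcompl : μ (ε ⁻¹' (⋃ j, B j))ᶜ = 1 - μ (ε ⁻¹' (⋃ j, B j)) :=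
    prob_compl_eq_one_sub (hεmeas hUm)
  calc ENNReal.ofReal (1 - Real.sqrt (2 / Real.pi) * (p : ℝ) ^ (-δ))
      = 1 - ENNReal.ofReal (Real.sqrt (2 / Real.pi) * (p : ℝ) ^ (-δ)) := by
        rw [ENNReal.ofReal_sub _ (by positivity), ENNReal.ofReal_one]
    _ ≤ 1 - μ (ε ⁻¹' (⋃ j, B j)) := tsub_le_tsub_left hbad 1
    _ = μ (ε ⁻¹' (⋃ j, B j))ᶜ := hcompl.symm
    _ ≤ _ := by
        apply measure_mono
        intro ω hω M hM
        refine det_part hp A hrank Φ σ δ hδ a ha0 ha1 ν2 hν2 hν2min H hH (ε ω) f Pen hPen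
          (Mhat ω) (hMhatMem ω) (hMhatMin ω) t ht2 ?_ M hM
        intro j
        by_contra hcon
        push Not at hcon
        exact hω (Set.mem_iUnion.mpr ⟨j, hcon⟩)
end
end

section
/- Let δ > 0, γ > 0, p ≥ 2, restrict the models to 𝓜_γ = {M ∈ 𝓜 : ‖Ψ_M‖_F² ≤ γ² n}, fix M₀ ∈ 𝓜_γ, and set U_M = 4 σ² (δ+1) ν_r^{-2} ‖Ψ_M‖_F² ln p. Let θ̂ be any measurable random element of the simplex Θ = {θ : θ_M ≥ 0 for all M ∈ 𝓜_γ, Σ_{M∈𝓜_γ} θ_M = 1}, and define f̂_{θ̂} = Σ_{M∈𝓜_γ} θ̂_M f̂_M and Δ₀ = 2σ⟨ξ, f̂_{θ̂} − f̂_{M₀}⟩ + (σ²/ν_r²) ‖Ψ_{M₀}ᵀ ε‖² − (3/2) U_{M₀} − Σ_{M∈𝓜_γ} θ̂_M U_M − (1/2) Σ_{M∈𝓜_γ} θ̂_M ‖f̂_M − f̂_{M₀}‖². Then E(Δ₀) ≤ U_{M₀} [ 3/(4(δ+1) ln p) − 3/2 ] + (4 σ² γ²/ν_r²) n p^{−δ}.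 -/
open MeasureTheory ProbabilityTheory Matrix Finset

noncomputable section

lemma restr_sq {n p : ℕ} (B : Matrix (Fin n) (Fin p) ℝ) (M : Finset (Fin p)) (e : Fin n → ℝ) :
    sqnorm ((restr B M)ᵀ.mulVec e) = ∑ j ∈ M, (ip (colv B j) e) ^ 2 := by
  unfold sqnorm
  rw [← Finset.sum_subset (Finset.subset_univ M)]
  · refine Finset.sum_congr rfl fun j hj => ?_
    simp [Matrix.mulVec, dotProduct, restr, hj, ip, colv]
  · intro j _ hj
    simp [Matrix.mulVec, dotProduct, restr, hj]

lemma restr_frob {n p : ℕ} (B : Matrix (Fin n) (Fin p) ℝ) (M : Finset (Fin p)) :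
    frob2 (restr B M) = ∑ j ∈ M, sqnorm (colv B j) := by
  unfold frob2
  rw [← Finset.sum_subset (Finset.subset_univ M)]
  · refine Finset.sum_congr rfl fun j hj => ?_
    simp [sqnorm, restr, hj, colv]
  · intro j _ hj
    simp [sqnorm, restr, hj, colv]

lemma ip_xiv {n m p : ℕ} (A : Matrix (Fin n) (Fin m) ℝ) (Φ : Matrix (Fin m) (Fin p) ℝ)
    (e : Fin n → ℝ) (x : Fin p → ℝ) :
    ip (xiv A e) (Φ.mulVec x) = ∑ j, ip (colv (Psi A Φ) j) e * x j := by
  have h1 : ip (xiv A e) (Φ.mulVec x) = (xiv A e) ⬝ᵥ (Φ.mulVec x) := rfl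
  have h2 : (∑ j, ip (colv (Psi A Φ) j) e * x j) = ((Psi A Φ)ᵀ.mulVec e) ⬝ᵥ x := rfl
  rw [h1, h2, Matrix.dotProduct_mulVec, ← Matrix.mulVec_transpose, xiv, Matrix.mulVec_mulVec]
  congr 2
  simp [Psi, Matrix.transpose_mul, Matrix.transpose_nonsing_inv, Matrix.mul_assoc]

lemma exists_coef {m p : ℕ} {Φ : Matrix (Fin m) (Fin p) ℝ} {M : Finset (Fin p)}
    {H : Matrix (Fin m) (Fin m) ℝ} (h : IsProjOnto Φ M H) (z : Fin m → ℝ) :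
    ∃ x : Fin p → ℝ, (∀ j, j ∉ M → x j = 0) ∧ Φ.mulVec x = H.mulVec z := by
  have hz : H.mulVec z ∈ Submodule.span ℝ (colv Φ '' (M : Set (Fin p))) := by
    rw [← h.2.2]; exact ⟨z, rfl⟩
  rw [Submodule.mem_span_image_finset_iff_exists_fun] at hz
  obtain ⟨c, hc⟩ := hz
  set x : Fin p → ℝ := fun j => if h : j ∈ M then c ⟨j, h⟩ else 0 with hx
  have hcx : ∀ k : M, c k = x k := fun k => by simp [hx]
  have hx0 : ∀ j, j ∉ M → x j = 0 := fun j hj => by simp [hx, hj]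
  refine ⟨x, hx0, ?_⟩
  simp_rw [hcx] at hc
  rw [Finset.sum_coe_sort M (fun j => x j • colv Φ j)] at hc
  rw [← hc]
  ext i
  rw [Finset.sum_apply]
  simp only [Matrix.mulVec, dotProduct, colv, Pi.smul_apply, smul_eq_mul]
  symm
  rw [← Finset.sum_subset (Finset.subset_univ M)]
  · exact Finset.sum_congr rfl fun j _ => mul_comm _ _
  · intro j _ hj
    simp [hx0 j hj]

lemma det_bound {n m p r : ℕ} (A : Matrix (Fin n) (Fin m) ℝ) (Φ : Matrix (Fin m) (Fin p) ℝ)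
    (σ : ℝ) (ν2 : ℝ) (hν2 : 0 < ν2)
    (hν2min : ∀ x : Fin p → ℝ, x ≠ 0 → sparse r x → ν2 * sqnorm x ≤ sqnorm (Φ.mulVec x))
    (H : Finset (Fin p) → Matrix (Fin m) (Fin m) ℝ)
    (hH : ∀ M : Finset (Fin p), IsProjOnto Φ M (H M)) (M M₀ : Finset (Fin p))
    (hM : 2 * M.card ≤ r) (hM₀ : 2 * M₀.card ≤ r) (z : Fin m → ℝ) (e : Fin n → ℝ) :
    2 * σ * ip (xiv A e) ((H M).mulVec z - (H M₀).mulVec z)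
      - 1 / 2 * sqnorm ((H M).mulVec z - (H M₀).mulVec z) ≤
    2 * σ ^ 2 / ν2 * (∑ j ∈ M, (ip (colv (Psi A Φ) j) e) ^ 2)
      + 2 * σ ^ 2 / ν2 * (∑ j ∈ M₀, (ip (colv (Psi A Φ) j) e) ^ 2) := by
  obtain ⟨x₁, h₁, e₁⟩ := exists_coef (hH M) z
  obtain ⟨x₂, h₂, e₂⟩ := exists_coef (hH M₀) z
  rw [← e₁, ← e₂, ← Matrix.mulVec_sub, ip_xiv]
  set x := x₁ - x₂ with hx
  have hx0 : ∀ j, j ∉ M ∪ M₀ → x j = 0 := by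
    intro j hj
    rw [Finset.mem_union, not_or] at hj
    simp [hx, h₁ j hj.1, h₂ j hj.2]
  have hsp : sparse r x := by
    unfold sparse
    have : Function.support x ⊆ ((M ∪ M₀ : Finset (Fin p)) : Set (Fin p)) := by
      intro j hj
      by_contra h
      exact hj (hx0 j h)
    calc (Function.support x).ncard ≤ ((M ∪ M₀ : Finset (Fin p)) : Set (Fin p)).ncard :=
          Set.ncard_le_ncard this (Finset.finite_toSet _)
      _ = (M ∪ M₀).card := Set.ncard_coe_finset _
      _ ≤ M.card + M₀.card := Finset.card_union_le _ _
      _ ≤ r := by omega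
  have hν : ν2 * sqnorm x ≤ sqnorm (Φ.mulVec x) := by
    by_cases h : x = 0
    · simp [h, sqnorm]
    · exact hν2min x h hsp
  set a : Fin p → ℝ := fun j => ip (colv (Psi A Φ) j) e with ha
  have hsub : ∑ j, a j * x j = ∑ j ∈ M ∪ M₀, a j * x j := by
    symm
    apply Finset.sum_subset (Finset.subset_univ _)
    intro j _ hj
    simp [hx0 j hj]
  have hsub2 : sqnorm x = ∑ j ∈ M ∪ M₀, x j ^ 2 := by
    symm
    apply Finset.sum_subset (Finset.subset_univ _)
    intro j _ hj
    simp [hx0 j hj]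
  have hun : ∑ j ∈ M ∪ M₀, a j ^ 2 ≤ ∑ j ∈ M, a j ^ 2 + ∑ j ∈ M₀, a j ^ 2 := by
    rw [← Finset.sum_union_inter]
    have : 0 ≤ ∑ j ∈ M ∩ M₀, a j ^ 2 := Finset.sum_nonneg fun _ _ => sq_nonneg _
    linarith
  have hpt : 2 * σ * ∑ j ∈ M ∪ M₀, a j * x j ≤
      2 * σ ^ 2 / ν2 * ∑ j ∈ M ∪ M₀, a j ^ 2 + ν2 / 2 * ∑ j ∈ M ∪ M₀, x j ^ 2 := by
    rw [Finset.mul_sum, Finset.mul_sum, Finset.mul_sum, ← Finset.sum_add_distrib]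
    refine Finset.sum_le_sum fun j _ => ?_
    have : 2 * σ ^ 2 / ν2 * a j ^ 2 + ν2 / 2 * x j ^ 2 - 2 * σ * (a j * x j)
      = (2 * σ * a j - ν2 * x j) ^ 2 / (2 * ν2) := by
      field_simp
      ring
    have h2 : 0 ≤ (2 * σ * a j - ν2 * x j) ^ 2 / (2 * ν2) := by positivity
    linarith
  have hc : 0 ≤ 2 * σ ^ 2 / ν2 := by positivity
  have := mul_le_mul_of_nonneg_left hun hc
  change 2 * σ * ∑ j, a j * x j - _ ≤ 2 * σ ^ 2 / ν2 * (∑ j ∈ M, a j ^ 2) + _ * (∑ j ∈ M₀, a j ^ 2)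
  rw [hsub]
  rw [hsub2] at hν
  linarith

lemma gauss_tail (s : ℝ) (hs : 0 ≤ s) :
    ∫ x, max (x ^ 2 - s) 0 ∂(gaussianReal 0 1) ≤ 2 * Real.exp (-s / 2) := by
  set G : ℝ → ℝ := fun u => gaussianPDFReal 0 1 u * (u ^ 2 + 1) with hG
  have hGnn : ∀ u, 0 ≤ G u := fun u => mul_nonneg (gaussianPDFReal_nonneg _ _ _) (by positivity)
  have hm2 : MemLp (fun x : ℝ => x) 2 (gaussianReal 0 1) := memLp_id_gaussianReal' 2 (by simp)
  have hG2 : ∫ u, G u = 2 := by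
    have h := integral_gaussianReal_eq_integral_smul (μ := 0) (v := 1) (f := fun u : ℝ => u ^ 2 + 1)
      one_ne_zero
    simp only [smul_eq_mul] at h
    rw [hG, ← h, integral_add hm2.integrable_sq (integrable_const _)]
    have hv := variance_fun_id_gaussianReal (μ := 0) (v := 1)
    rw [variance_eq_integral (by fun_prop), integral_id_gaussianReal] at hv
    simp only [sub_zero] at hv
    rw [hv]; simp; norm_num
  have hGi : Integrable G := by
    by_contra h
    rw [integral_undef h] at hG2
    norm_num at hG2
  obtain ⟨t, ht, rfl⟩ : ∃ t : ℝ, 0 ≤ t ∧ s = t ^ 2 := ⟨√s, Real.sqrt_nonneg _, (Real.sq_sqrt hs).symm⟩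
  set G1 : ℝ → ℝ := (Set.Ioi 0).indicator G
  set G2 : ℝ → ℝ := (Set.Iio 0).indicator G
  have hG1i : Integrable G1 := hGi.indicator measurableSet_Ioi
  have hG2i : Integrable G2 := hGi.indicator measurableSet_Iio
  have hsum : (∫ u, G1 u) + ∫ u, G2 u ≤ 2 := by
    rw [← integral_add hG1i hG2i, ← hG2]
    refine integral_mono (hG1i.add hG2i) hGi fun u => ?_
    simp only [G1, G2, Set.indicator_apply, Set.mem_Ioi, Set.mem_Iio]
    have := hGnn u
    split_ifs <;> linarith
  have key : ∀ u, 0 ≤ u → gaussianPDFReal 0 1 (u + t) * ((u + t) ^ 2 - t ^ 2) ≤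
      Real.exp (-t ^ 2 / 2) * G u := by
    intro u hu
    have e1 : gaussianPDFReal 0 1 (u + t) =
        Real.exp (-t ^ 2 / 2) * (gaussianPDFReal 0 1 u * Real.exp (-(t * u))) := by
      simp only [gaussianPDFReal]
      have : Real.exp (-(u + t - 0) ^ 2 / (2 * ((1 : NNReal) : ℝ))) =
        Real.exp (-t ^ 2 / 2) * (Real.exp (-(u - 0) ^ 2 / (2 * ((1 : NNReal) : ℝ))) * Real.exp (-(t * u))) := by
        rw [← Real.exp_add, ← Real.exp_add]
        congr 1
        simp
        ring
      rw [this]; ring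
    rw [e1, hG, mul_assoc, mul_assoc]
    refine mul_le_mul_of_nonneg_left (mul_le_mul_of_nonneg_left ?_ (gaussianPDFReal_nonneg _ _ _))
      (Real.exp_nonneg _)
    have htu : 0 ≤ t * u := mul_nonneg ht hu
    have hq := Real.quadratic_le_exp_of_nonneg htu
    have hle : Real.exp (-(t * u)) ≤ 1 := Real.exp_le_one_iff.2 (by linarith)
    have h1 : Real.exp (-(t * u)) * Real.exp (t * u) = 1 := by rw [← Real.exp_add]; simp
    have hpos := Real.exp_pos (-(t * u))
    have h2 : 2 * (t * u) ≤ Real.exp (t * u) := by nlinarith [sq_nonneg (t * u - 1)]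
    have h3 := mul_le_mul_of_nonneg_left h2 hpos.le
    have h4 := mul_le_mul_of_nonneg_right hle (sq_nonneg u)
    nlinarith
  have pdf_neg : ∀ x, gaussianPDFReal 0 1 (-x) = gaussianPDFReal 0 1 x := by
    intro x; simp [gaussianPDFReal]
  rw [integral_gaussianReal_eq_integral_smul one_ne_zero]
  calc ∫ x, gaussianPDFReal 0 1 x • max (x ^ 2 - t ^ 2) 0
      ≤ ∫ x, (Real.exp (-t ^ 2 / 2) * G1 (x - t) + Real.exp (-t ^ 2 / 2) * G2 (x + t)) := by
        refine integral_mono_of_nonneg (Filter.Eventually.of_forall fun x => ?_)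
          (((hG1i.comp_sub_right t).const_mul _).add ((hG2i.comp_add_right t).const_mul _))
          (Filter.Eventually.of_forall fun x => ?_)
        · exact mul_nonneg (gaussianPDFReal_nonneg _ _ _) (le_max_right _ _)
        · have hp1 : 0 ≤ Real.exp (-t ^ 2 / 2) * G1 (x - t) :=
            mul_nonneg (Real.exp_nonneg _) (Set.indicator_nonneg (fun u _ => hGnn u) _)
          have hp2 : 0 ≤ Real.exp (-t ^ 2 / 2) * G2 (x + t) :=
            mul_nonneg (Real.exp_nonneg _) (Set.indicator_nonneg (fun u _ => hGnn u) _)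
          simp only [smul_eq_mul]
          rcases lt_or_ge t x with h | h
          · have k := key (x - t) (by linarith)
            have : G1 (x - t) = G (x - t) := Set.indicator_of_mem (by simpa using h) _
            rw [sub_add_cancel] at k
            rw [max_eq_left (by nlinarith), this]
            linarith
          · rcases lt_or_ge x (-t) with h' | h'
            · have k := key (-x - t) (by linarith)
              have : G2 (x + t) = G (x + t) :=
                Set.indicator_of_mem (by simp only [Set.mem_Iio]; linarith) _
              have hg : G (-x - t) = G (x + t) := by
                have : -x - t = -(x + t) := by ring
                simp only [hG, this, pdf_neg]; ring
              rw [sub_add_cancel, pdf_neg, hg, neg_sq] at k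
              rw [max_eq_left (by nlinarith), this]
              linarith
            · rw [max_eq_right (by nlinarith), mul_zero]
              linarith
    _ = Real.exp (-t ^ 2 / 2) * ((∫ u, G1 u) + ∫ u, G2 u) := by
        rw [integral_add ((hG1i.comp_sub_right t).const_mul _) ((hG2i.comp_add_right t).const_mul _),
          integral_const_mul, integral_const_mul, integral_sub_right_eq_self (f := G1),
          integral_add_right_eq_self (f := G2), mul_add]
    _ ≤ 2 * Real.exp (-t ^ 2 / 2) := by
        rw [mul_comm]
        exact mul_le_mul_of_nonneg_right hsum (Real.exp_nonneg _)

lemma law_ip {n : ℕ} {Ω : Type*} [MeasurableSpace Ω] (μ : Measure Ω)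
    (ε : Ω → Fin n → ℝ) (hεmeas : Measurable ε)
    (hεdist : Measure.map ε μ = Measure.pi fun _ : Fin n => gaussianReal 0 1) (w : Fin n → ℝ) :
    Measure.map (fun ω => ip w (ε ω)) μ = gaussianReal 0 (sqnorm w).toNNReal := by
  set L : StrongDual ℝ (EuclideanSpace ℝ (Fin n)) := innerSL ℝ (WithLp.toLp 2 w)
  have h1 : (fun ω => ip w (ε ω)) = L ∘ (WithLp.toLp 2) ∘ ε := by
    ext ω
    simp [L, ip, PiLp.inner_apply, mul_comm]
  rw [h1, ← Measure.map_map (by fun_prop) (by fun_prop), ← Measure.map_map (by fun_prop) hεmeas,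
    hεdist, map_pi_eq_stdGaussian, IsGaussian.map_eq_gaussianReal, integral_strongDual_stdGaussian,
    variance_dual_stdGaussian]
  congr 2
  simp [L, innerSL_apply_norm, EuclideanSpace.norm_sq_eq, sqnorm]

lemma memLp_ip {n : ℕ} {Ω : Type*} [MeasurableSpace Ω] (μ : Measure Ω)
    (ε : Ω → Fin n → ℝ) (hεmeas : Measurable ε)
    (hεdist : Measure.map ε μ = Measure.pi fun _ : Fin n => gaussianReal 0 1) (w : Fin n → ℝ) :
    MemLp (fun ω => ip w (ε ω)) 2 μ := by
  have hm : Measurable (fun ω => ip w (ε ω)) := by unfold ip; fun_prop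
  have h : MemLp (fun x : ℝ => x) 2 (Measure.map (fun ω => ip w (ε ω)) μ) := by
    rw [law_ip μ ε hεmeas hεdist w]
    exact memLp_id_gaussianReal' 2 (by simp)
  exact (memLp_map_measure_iff (by fun_prop) hm.aemeasurable).1 h

lemma integral_ip_sq {n : ℕ} {Ω : Type*} [MeasurableSpace Ω] (μ : Measure Ω)
    (ε : Ω → Fin n → ℝ) (hεmeas : Measurable ε)
    (hεdist : Measure.map ε μ = Measure.pi fun _ : Fin n => gaussianReal 0 1) (w : Fin n → ℝ) :
    ∫ ω, (ip w (ε ω)) ^ 2 ∂μ = sqnorm w := by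
  have hm : Measurable (fun ω => ip w (ε ω)) := by unfold ip; fun_prop
  have h : ∫ x, x ^ 2 ∂(Measure.map (fun ω => ip w (ε ω)) μ) = ∫ ω, (ip w (ε ω)) ^ 2 ∂μ :=
    integral_map hm.aemeasurable (by fun_prop)
  rw [← h, law_ip μ ε hεmeas hεdist w]
  have hv := variance_fun_id_gaussianReal (μ := 0) (v := (sqnorm w).toNNReal)
  rw [variance_eq_integral (by fun_prop), integral_id_gaussianReal] at hv
  simp only [sub_zero] at hv
  rw [hv]
  exact Real.coe_toNNReal _ (sqnorm_nonneg' w)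

lemma integral_tail_le {n : ℕ} {Ω : Type*} [MeasurableSpace Ω] (μ : Measure Ω)
    (ε : Ω → Fin n → ℝ) (hεmeas : Measurable ε)
    (hεdist : Measure.map ε μ = Measure.pi fun _ : Fin n => gaussianReal 0 1) (w : Fin n → ℝ)
    (s : ℝ) (hs : 0 ≤ s) :
    ∫ ω, max ((ip w (ε ω)) ^ 2 / sqnorm w - s) 0 ∂μ ≤ 2 * Real.exp (-s / 2) := by
  rcases (sqnorm_nonneg' w).eq_or_lt with h0 | h0
  · simp only [← h0, div_zero, zero_sub]
    rw [max_eq_right (by linarith)]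
    simp [Real.exp_nonneg]
  · set u : Fin n → ℝ := fun i => w i / √(sqnorm w) with hu
    have hu1 : sqnorm u = 1 := by
      have : sqnorm u = sqnorm w / sqnorm w := by
        conv_lhs => rw [sqnorm]
        simp only [hu, div_pow, Real.sq_sqrt h0.le]
        rw [← Finset.sum_div]
        rfl
      rw [this, div_self h0.ne']
    have hip : ∀ e, ip u e ^ 2 = ip w e ^ 2 / sqnorm w := by
      intro e
      have : ip u e = ip w e / √(sqnorm w) := by
        simp only [ip, hu, Finset.sum_div]
        exact Finset.sum_congr rfl fun i _ => by ring
      rw [this, div_pow, Real.sq_sqrt h0.le]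
    have hm : Measurable (fun ω => ip u (ε ω)) := by unfold ip; fun_prop
    have h : ∫ x, max (x ^ 2 - s) 0 ∂(Measure.map (fun ω => ip u (ε ω)) μ)
        = ∫ ω, max ((ip u (ε ω)) ^ 2 - s) 0 ∂μ :=
      integral_map hm.aemeasurable (Continuous.aestronglyMeasurable (by fun_prop))
    simp_rw [← hip]
    rw [← h, law_ip μ ε hεmeas hεdist u, hu1, Real.toNNReal_one]
    exact gauss_tail s hs

lemma memLp_mulVec {k l : ℕ} {Ω : Type*} [MeasurableSpace Ω] {μ : Measure Ω}
    (B : Matrix (Fin k) (Fin l) ℝ) {X : Ω → Fin l → ℝ} (hX : ∀ i, MemLp (fun ω => X ω i) 2 μ)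
    (i : Fin k) : MemLp (fun ω => B.mulVec (X ω) i) 2 μ := by
  simp only [Matrix.mulVec, dotProduct]
  exact memLp_finsetSum _ fun j _ => (hX j).const_mul _

lemma integrable_ip {k : ℕ} {Ω : Type*} [MeasurableSpace Ω] {μ : Measure Ω}
    {X Y : Ω → Fin k → ℝ} (hX : ∀ i, MemLp (fun ω => X ω i) 2 μ)
    (hY : ∀ i, MemLp (fun ω => Y ω i) 2 μ) : Integrable (fun ω => ip (X ω) (Y ω)) μ := by
  unfold ip
  exact integrable_finsetSum _ fun i _ => (hX i).integrable_mul (hY i)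

lemma integrable_sqnorm {k : ℕ} {Ω : Type*} [MeasurableSpace Ω] {μ : Measure Ω}
    {X : Ω → Fin k → ℝ} (hX : ∀ i, MemLp (fun ω => X ω i) 2 μ) :
    Integrable (fun ω => sqnorm (X ω)) μ := by
  unfold sqnorm
  exact integrable_finsetSum _ fun i _ => (hX i).integrable_sq

lemma ip_agg {m p : ℕ} (C : Finset (Finset (Fin p)))
    (H : Finset (Fin p) → Matrix (Fin m) (Fin m) ℝ) (z ξ g : Fin m → ℝ)
    (θ : Finset (Fin p) → ℝ) (hθ : ∑ M ∈ C, θ M = 1) :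
    ip ξ (aggEst C H z θ - g) = ∑ M ∈ C, θ M * ip ξ ((H M).mulVec z - g) := by
  have h1 : aggEst C H z θ - g = ∑ M ∈ C, θ M • ((H M).mulVec z - g) := by
    simp only [smul_sub, Finset.sum_sub_distrib, aggEst]
    rw [← Finset.sum_smul, hθ, one_smul]
  rw [h1]
  simp only [ip, Finset.sum_apply, Pi.smul_apply, smul_eq_mul, Finset.mul_sum]
  rw [Finset.sum_comm]
  exact Finset.sum_congr rfl fun M _ => Finset.sum_congr rfl fun i _ => by ring

set_option maxHeartbeats 1000000 in
/-- Lemma 4, second part: the bound in expectation for `Δ₀` over the restricted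
collection `𝓜_γ`. -/
theorem lemma4_expectation
    {n m p r : ℕ} (hp : 2 ≤ p) (hmn : m ≤ n)
    (A : Matrix (Fin n) (Fin m) ℝ) (hrank : A.rank = m)
    (Φ : Matrix (Fin m) (Fin p) ℝ) (hΦnorm : ∀ j, sqnorm (colv Φ j) = 1)
    (σ : ℝ) (hσ : 0 < σ) (δ : ℝ) (hδ : 0 < δ) (γ : ℝ) (hγ : 0 < γ)
    (ν2 : ℝ) (hν2 : 0 < ν2)
    (hν2min : ∀ x : Fin p → ℝ, x ≠ 0 → sparse r x → ν2 * sqnorm x ≤ sqnorm (Φ.mulVec x))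
    (H : Finset (Fin p) → Matrix (Fin m) (Fin m) ℝ)
    (hH : ∀ M : Finset (Fin p), IsProjOnto Φ M (H M))
    {Ω : Type*} [MeasurableSpace Ω] (μ : Measure Ω) [IsProbabilityMeasure μ]
    (ε : Ω → Fin n → ℝ) (hεmeas : Measurable ε)
    (hεdist : Measure.map ε μ = Measure.pi fun _ : Fin n => gaussianReal 0 1)
    (f : Fin m → ℝ)
    (M₀ : Finset (Fin p)) (hM₀ : M₀ ∈ modelsG r A Φ γ)
    (θhat : Ω → Finset (Fin p) → ℝ)
    (hθmeas : ∀ M : Finset (Fin p), Measurable fun ω => θhat ω M)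
    (hθnn : ∀ ω, ∀ M ∈ modelsG r A Φ γ, 0 ≤ θhat ω M)
    (hθsum : ∀ ω, ∑ M ∈ modelsG r A Φ γ, θhat ω M = 1) :
    ∫ ω,
        (2 * σ * ip (xiv A (ε ω))
            (aggEst (modelsG r A Φ γ) H (zv A f σ (ε ω)) (θhat ω) -
              (H M₀).mulVec (zv A f σ (ε ω))) +
          σ ^ 2 / ν2 * sqnorm ((restr (Psi A Φ) M₀)ᵀ.mulVec (ε ω)) -
          3 / 2 * Ufun A Φ σ δ ν2 M₀ -
          (∑ M ∈ modelsG r A Φ γ, θhat ω M * Ufun A Φ σ δ ν2 M) -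
          1 / 2 * ∑ M ∈ modelsG r A Φ γ,
            θhat ω M *
              sqnorm ((H M).mulVec (zv A f σ (ε ω)) - (H M₀).mulVec (zv A f σ (ε ω)))) ∂μ ≤
      Ufun A Φ σ δ ν2 M₀ * (3 / (4 * (δ + 1) * Real.log p) - 3 / 2) +
        4 * σ ^ 2 * γ ^ 2 / ν2 * (n : ℝ) * (p : ℝ) ^ (-δ) := by
  set C := modelsG r A Φ γ with hC
  have hmem : ∀ M ∈ C, 2 * M.card ≤ r ∧ frob2 (restr (Psi A Φ) M) ≤ γ ^ 2 * (n : ℝ) := by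
    intro M hM
    simpa [hC, modelsG] using hM
  have hp1 : (1 : ℝ) < p := by exact_mod_cast (by omega : 1 < p)
  have hlog : 0 < Real.log p := Real.log_pos hp1
  set v : Fin p → ℝ := fun j => sqnorm (colv (Psi A Φ) j) with hv
  set a : Fin p → Ω → ℝ := fun j ω => ip (colv (Psi A Φ) j) (ε ω) with ha
  set s : ℝ := 2 * (δ + 1) * Real.log p with hs
  have hs0 : 0 ≤ s := by positivity
  set Y : Fin p → Ω → ℝ := fun j ω => max (a j ω ^ 2 / v j - s) 0 with hY
  set c : ℝ := 2 * σ ^ 2 / ν2 with hc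
  have hc0 : 0 ≤ c := by positivity
  have hv0 : ∀ j, 0 ≤ v j := fun j => sqnorm_nonneg' _
  have hY0 : ∀ j ω, 0 ≤ Y j ω := fun j ω => le_max_right _ _
  have hU : ∀ M, Ufun A Φ σ δ ν2 M = c * (s * ∑ j ∈ M, v j) := by
    intro M
    rw [Ufun, restr_frob]
    simp only [hc, hs, hv]
    ring
  have ha2 : ∀ j, MemLp (a j) 2 μ := fun j => memLp_ip μ ε hεmeas hεdist _
  have haY : ∀ j ω, a j ω ^ 2 - s * v j ≤ v j * Y j ω := by
    intro j ω
    rcases (hv0 j).eq_or_lt with h0 | h0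
    · have hz : ∀ i, colv (Psi A Φ) j i = 0 := by
        intro i
        have := (Finset.sum_eq_zero_iff_of_nonneg (fun i _ => sq_nonneg _)).1 h0.symm i
          (Finset.mem_univ i)
        exact pow_eq_zero_iff (two_ne_zero) |>.1 this
      have : a j ω = 0 := by simp [ha, ip, hz]
      rw [this, ← h0]; simp
    · have h1 : a j ω ^ 2 / v j - s ≤ Y j ω := le_max_left _ _
      have h2 := mul_le_mul_of_nonneg_left h1 h0.le
      have h3 : v j * (a j ω ^ 2 / v j - s) = a j ω ^ 2 - s * v j := by
        field_simp
      linarith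
  have hYi : ∀ j, Integrable (Y j) μ := fun j =>
    (((ha2 j).integrable_sq.div_const _).sub (integrable_const s)).pos_part
  have hYint : ∀ j, ∫ ω, Y j ω ∂μ ≤ 2 * Real.exp (-s / 2) := fun j =>
    integral_tail_le μ ε hεmeas hεdist _ s hs0
  have hYsum : ∀ M ∈ C, ∀ ω, c * (∑ j ∈ M, a j ω ^ 2) - c * (s * ∑ j ∈ M, v j)
      ≤ c * (γ ^ 2 * n * ∑ j, Y j ω) := by
    intro M hM ω
    rw [← mul_sub]
    refine mul_le_mul_of_nonneg_left ?_ hc0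
    rw [Finset.mul_sum, ← Finset.sum_sub_distrib]
    calc ∑ j ∈ M, (a j ω ^ 2 - s * v j) ≤ ∑ j ∈ M, v j * ∑ k, Y k ω := by
          refine Finset.sum_le_sum fun j _ => (haY j ω).trans ?_
          exact mul_le_mul_of_nonneg_left
            (Finset.single_le_sum (f := fun k => Y k ω) (fun k _ => hY0 k ω) (Finset.mem_univ j))
            (hv0 j)
      _ = (∑ j ∈ M, v j) * ∑ k, Y k ω := by rw [Finset.sum_mul]
      _ ≤ _ := by
          refine mul_le_mul_of_nonneg_right ?_ (Finset.sum_nonneg fun k _ => hY0 k ω)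
          have := (hmem M hM).2
          rwa [restr_frob] at this
  have hRi1 : Integrable (fun ω => 3 * σ ^ 2 / ν2 * ∑ j ∈ M₀, a j ω ^ 2) μ :=
    (integrable_finsetSum _ fun j _ => (ha2 j).integrable_sq).const_mul _
  have hRi2 : Integrable (fun ω => c * (γ ^ 2 * n * ∑ j, Y j ω)) μ :=
    ((integrable_finsetSum _ fun j _ => hYi j).const_mul _).const_mul _
  have hRi : Integrable (fun ω => 3 * σ ^ 2 / ν2 * (∑ j ∈ M₀, a j ω ^ 2)
      + c * (γ ^ 2 * n * ∑ j, Y j ω) - 3 / 2 * Ufun A Φ σ δ ν2 M₀) μ :=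
    (hRi1.add hRi2).sub (integrable_const _)
  -- integrability of the left-hand side
  have hξ : ∀ i, MemLp (fun ω => xiv A (ε ω) i) 2 μ := fun i =>
    memLp_ip μ ε hεmeas hεdist _
  have hεi : ∀ i, MemLp (fun ω => ε ω i) 2 μ := by
    intro i
    have := memLp_ip μ ε hεmeas hεdist (Pi.single i 1)
    simpa [ip, Pi.single_apply] using this
  have hz : ∀ i, MemLp (fun ω => zv A f σ (ε ω) i) 2 μ := by
    intro i
    unfold zv
    have hk : ∀ k, MemLp (fun ω => (A.mulVec f + σ • ε ω) k) 2 μ := by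
      intro k
      simp only [Pi.add_apply, Pi.smul_apply, smul_eq_mul]
      have h1 : MemLp (fun _ : Ω => (A.mulVec f) k) 2 μ := memLp_const _
      have h2 : MemLp (fun ω => σ * ε ω k) 2 μ := (hεi k).const_mul σ
      exact h1.add h2
    exact memLp_mulVec ((Aᵀ * A)⁻¹ * Aᵀ) (X := fun ω => A.mulVec f + σ • ε ω) hk i
  have hd : ∀ M i, MemLp (fun ω => ((H M).mulVec (zv A f σ (ε ω))
      - (H M₀).mulVec (zv A f σ (ε ω))) i) 2 μ := fun M i =>
    (memLp_mulVec (H M) hz i).sub (memLp_mulVec (H M₀) hz i)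
  have hθ1 : ∀ M ∈ C, ∀ᵐ ω ∂μ, ‖θhat ω M‖ ≤ 1 := by
    intro M hM
    refine Filter.Eventually.of_forall fun ω => ?_
    rw [Real.norm_eq_abs, abs_of_nonneg (hθnn ω M hM), ← hθsum ω]
    exact Finset.single_le_sum (f := fun M => θhat ω M) (fun k hk => hθnn ω k hk) hM
  have hθi : ∀ g : Finset (Fin p) → Ω → ℝ, (∀ M, Integrable (g M) μ) →
      Integrable (fun ω => ∑ M ∈ C, θhat ω M * g M ω) μ := fun g hg =>
    integrable_finsetSum _ fun M hM =>
      (hg M).bdd_mul (hθmeas M).aestronglyMeasurable (hθ1 M hM)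
  have hL : ∀ ω, 2 * σ * ip (xiv A (ε ω))
            (aggEst C H (zv A f σ (ε ω)) (θhat ω) - (H M₀).mulVec (zv A f σ (ε ω))) =
      2 * σ * ∑ M ∈ C, θhat ω M * ip (xiv A (ε ω))
        ((H M).mulVec (zv A f σ (ε ω)) - (H M₀).mulVec (zv A f σ (ε ω))) := fun ω => by
    rw [ip_agg C H _ _ _ _ (hθsum ω)]
  simp_rw [hL, restr_sq]
  have i1 : Integrable (fun ω => 2 * σ * ∑ M ∈ C, θhat ω M * ip (xiv A (ε ω))
        ((H M).mulVec (zv A f σ (ε ω)) - (H M₀).mulVec (zv A f σ (ε ω)))) μ :=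
    (hθi (fun M ω => ip (xiv A (ε ω))
        ((H M).mulVec (zv A f σ (ε ω)) - (H M₀).mulVec (zv A f σ (ε ω))))
      fun M => integrable_ip hξ (hd M)).const_mul _
  have i2 : Integrable (fun ω => σ ^ 2 / ν2 * ∑ j ∈ M₀, ip (colv (Psi A Φ) j) (ε ω) ^ 2) μ :=
    (integrable_finsetSum _ fun j _ => (ha2 j).integrable_sq).const_mul _
  have i3 : Integrable (fun ω => ∑ M ∈ C, θhat ω M * Ufun A Φ σ δ ν2 M) μ :=
    hθi (fun M _ => Ufun A Φ σ δ ν2 M) fun M => integrable_const _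
  have i4 : Integrable (fun ω => 1 / 2 * ∑ M ∈ C, θhat ω M *
        sqnorm ((H M).mulVec (zv A f σ (ε ω)) - (H M₀).mulVec (zv A f σ (ε ω)))) μ :=
    (hθi (fun M ω => sqnorm ((H M).mulVec (zv A f σ (ε ω)) - (H M₀).mulVec (zv A f σ (ε ω))))
      fun M => integrable_sqnorm (hd M)).const_mul _
  have hLi := (((i1.add i2).sub (integrable_const (3 / 2 * Ufun A Φ σ δ ν2 M₀))).sub i3).sub i4
  refine (integral_mono hLi hRi ?_).trans ?_
  · intro ω
    simp only [Pi.add_apply, Pi.sub_apply]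
    have hM0 := (hmem M₀ hM₀).1
    have hsum : ∑ M ∈ C, θhat ω M * (2 * σ * ip (xiv A (ε ω))
          ((H M).mulVec (zv A f σ (ε ω)) - (H M₀).mulVec (zv A f σ (ε ω)))
        - 1 / 2 * sqnorm ((H M).mulVec (zv A f σ (ε ω)) - (H M₀).mulVec (zv A f σ (ε ω)))
        - Ufun A Φ σ δ ν2 M) ≤
        ∑ M ∈ C, θhat ω M * (c * (∑ j ∈ M₀, a j ω ^ 2) + c * (γ ^ 2 * n * ∑ j, Y j ω)) := by
      refine Finset.sum_le_sum fun M hM => mul_le_mul_of_nonneg_left ?_ (hθnn ω M hM)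
      have h1 := det_bound A Φ σ ν2 hν2 hν2min H hH M M₀ (hmem M hM).1 hM0 (zv A f σ (ε ω)) (ε ω)
      have h2 := hYsum M hM ω
      rw [hU]
      simp only [ha, hc] at h2 ⊢
      linarith
    rw [← Finset.sum_mul, hθsum ω, one_mul] at hsum
    simp only [mul_sub, Finset.sum_sub_distrib] at hsum
    have e1 : ∀ M, θhat ω M * (2 * σ * ip (xiv A (ε ω))
          ((H M).mulVec (zv A f σ (ε ω)) - (H M₀).mulVec (zv A f σ (ε ω)))) =
        2 * σ * (θhat ω M * ip (xiv A (ε ω))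
          ((H M).mulVec (zv A f σ (ε ω)) - (H M₀).mulVec (zv A f σ (ε ω)))) := fun M => by ring
    have e2 : ∀ M, θhat ω M * (1 / 2 * sqnorm ((H M).mulVec (zv A f σ (ε ω))
          - (H M₀).mulVec (zv A f σ (ε ω)))) =
        1 / 2 * (θhat ω M * sqnorm ((H M).mulVec (zv A f σ (ε ω))
          - (H M₀).mulVec (zv A f σ (ε ω)))) := fun M => by ring
    simp only [e1, e2, ← Finset.mul_sum] at hsum
    have e3 : 3 * σ ^ 2 / ν2 * (∑ j ∈ M₀, a j ω ^ 2) =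
        c * (∑ j ∈ M₀, a j ω ^ 2) + σ ^ 2 / ν2 * (∑ j ∈ M₀, a j ω ^ 2) := by
      rw [hc]; ring
    simp only [e3]
    linarith
  · have hRi12 : Integrable (fun ω => 3 * σ ^ 2 / ν2 * (∑ j ∈ M₀, a j ω ^ 2)
        + c * (γ ^ 2 * n * ∑ j, Y j ω)) μ := hRi1.add hRi2
    rw [integral_sub hRi12 (integrable_const _), integral_add hRi1 hRi2,
      integral_const_mul, integral_const_mul, integral_const_mul,
      integral_finsetSum _ (fun j _ => (ha2 j).integrable_sq),
      integral_finsetSum _ (fun j _ => hYi j)]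
    have hE : ∑ j ∈ M₀, ∫ ω, a j ω ^ 2 ∂μ = ∑ j ∈ M₀, v j :=
      Finset.sum_congr rfl fun j _ => integral_ip_sq μ ε hεmeas hεdist _
    rw [hE]
    have hYS : ∑ j, ∫ ω, Y j ω ∂μ ≤ 2 * (p : ℝ) ^ (-δ) := by
      calc ∑ j, ∫ ω, Y j ω ∂μ ≤ ∑ _j : Fin p, 2 * Real.exp (-s / 2) :=
            Finset.sum_le_sum fun j _ => hYint j
        _ = 2 * ((p : ℝ) * Real.exp (-s / 2)) := by simp; ring
        _ = 2 * (p : ℝ) ^ (-δ) := by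
            have hp0 : (0 : ℝ) < p := by linarith
            congr 1
            conv_lhs => rw [← Real.exp_log hp0]
            rw [Real.exp_log hp0, Real.rpow_def_of_pos hp0]
            nth_rewrite 1 [← Real.exp_log hp0]
            rw [← Real.exp_add]
            congr 1
            rw [hs]; ring
    have h1 : c * (γ ^ 2 * n * ∑ j, ∫ ω, Y j ω ∂μ) ≤ c * (γ ^ 2 * n * (2 * (p : ℝ) ^ (-δ))) := by
      gcongr
    have h2 : Ufun A Φ σ δ ν2 M₀ * (3 / (4 * (δ + 1) * Real.log p) - 3 / 2) =
        3 * σ ^ 2 / ν2 * (∑ j ∈ M₀, v j) - 3 / 2 * Ufun A Φ σ δ ν2 M₀ := by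
      have hd1 : δ + 1 ≠ 0 := by positivity
      rw [mul_sub, hU, hc, hs]
      field_simp
      ring
    have h3 : c * (γ ^ 2 * n * (2 * (p : ℝ) ^ (-δ))) =
        4 * σ ^ 2 * γ ^ 2 / ν2 * (n : ℝ) * (p : ℝ) ^ (-δ) := by
      rw [hc]; ring
    rw [h2, ← h3]
    simp only [integral_const, probReal_univ, one_smul]
    linarith
end
end

section
/- Let δ > 0, γ > 0, p ≥ 2, and let 𝓜_γ = {M ∈ 𝓜 : ‖Ψ_M‖_F² ≤ γ² n}. Let θ̂ be any measurable random element of the simplex {θ : θ_M ≥ 0 for all M ∈ 𝓜_γ, Σ_{M∈𝓜_γ} θ_M = 1}, and set Δ₀₂ = (2σ²/ν_r²) Σ_{M∈𝓜_γ} θ̂_M [ ‖Ψ_Mᵀ ε‖² − 2(δ+1)(ln p) ‖Ψ_M‖_F² ]. Then E(Δ₀₂) ≤ 4 σ² γ² ν_r^{-2} n p^{−δ}. -/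
open MeasureTheory ProbabilityTheory Matrix Finset

noncomputable section

lemma law_aux {n : ℕ} (c : Fin n → ℝ) (hc : ∑ i, c i ^ 2 = 1) :
    Measure.map (fun x : Fin n → ℝ => ∑ i, c i * x i)
      (Measure.pi fun _ : Fin n => gaussianReal 0 1) = gaussianReal 0 1 := by
  have hm : Measurable (fun x : Fin n → ℝ => ∑ i, c i * x i) := by fun_prop
  have : IsProbabilityMeasure (Measure.map (fun x : Fin n → ℝ => ∑ i, c i * x i)
      (Measure.pi fun _ : Fin n => gaussianReal 0 1)) :=
    Measure.isProbabilityMeasure_map hm.aemeasurable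
  apply Measure.ext_of_charFun
  funext s
  rw [charFun_apply_real, integral_map hm.aemeasurable (by fun_prop)]
  have h1 : ∀ x : Fin n → ℝ, Complex.exp (s * ((∑ i, c i * x i : ℝ) : ℂ) * Complex.I)
      = ∏ i, Complex.exp (((s * c i : ℝ) : ℂ) * (x i : ℂ) * Complex.I) := by
    intro x
    rw [← Complex.exp_sum]
    congr 1
    push_cast
    rw [Finset.mul_sum, Finset.sum_mul]
    exact Finset.sum_congr rfl fun i _ => by ring
  simp_rw [h1]
  rw [integral_fintype_prod_eq_prod (μ := fun _ : Fin n => gaussianReal 0 1)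
    (fun i (y : ℝ) => Complex.exp (((s * c i : ℝ) : ℂ) * (y : ℂ) * Complex.I))]
  simp_rw [← charFun_apply_real, charFun_gaussianReal]
  rw [← Complex.exp_sum]
  congr 1
  have : ((∑ i, c i ^ 2 : ℝ) : ℂ) = 1 := by rw [hc]; simp
  push_cast at this ⊢
  simp only [mul_zero, zero_mul, zero_sub, one_mul, mul_pow]
  rw [Finset.sum_neg_distrib, ← Finset.sum_div, ← Finset.mul_sum, this]
  ring

lemma shift_aux (t : ℝ) : ∫ x in Set.Ioi t, Real.exp (-(x - t) ^ 2 / 2)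
    = √(2 * Real.pi) / 2 := by
  have h := (measurePreserving_add_right volume (-t)).setIntegral_preimage_emb
    (measurableEmbedding_addRight (-t)) (fun x : ℝ => Real.exp (-(1/2) * x ^ 2)) (Set.Ioi 0)
  have h2 : (fun x : ℝ => x + -t) ⁻¹' Set.Ioi 0 = Set.Ioi t := by
    ext x; simp
  rw [h2, integral_gaussian_Ioi] at h
  rw [show (2 * Real.pi) = Real.pi / (1/2) by ring, ← h]
  congr 1; funext x; congr 1; ring

lemma integ_aux (k : ℕ) : Integrable (fun x : ℝ => x ^ k * Real.exp (-x ^ 2 / 2)) := by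
  have := integrable_rpow_mul_exp_neg_mul_sq (b := 1/2) (by norm_num) (s := k)
    (by have : (0:ℝ) ≤ k := by positivity
        linarith)
  refine this.congr (Filter.Eventually.of_forall fun x => ?_)
  simp only [Real.rpow_natCast]
  congr 2; ring

lemma half_aux (t : ℝ) (ht : 0 ≤ t) :
    ∫ x in Set.Ioi t, (x ^ 2 - t ^ 2) * Real.exp (-x ^ 2 / 2)
      ≤ √(2 * Real.pi) * Real.exp (-t ^ 2 / 2) := by
  have i0 := (integ_aux 0).integrableOn (s := Set.Ioi t)
  have i1 := (integ_aux 1).integrableOn (s := Set.Ioi t)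
  have i2 := (integ_aux 2).integrableOn (s := Set.Ioi t)
  simp only [pow_zero, one_mul, pow_one] at i0 i1
  have ftc : ∫ x in Set.Ioi t, (x * (x - t) - 1) * Real.exp (-x ^ 2 / 2) = 0 - 0 := by
    have key := integral_Ioi_of_hasDerivAt_of_tendsto' (a := t) (m := 0)
      (f := fun x => - ((x - t) * Real.exp (-x ^ 2 / 2)))
      (f' := fun x => (x * (x - t) - 1) * Real.exp (-x ^ 2 / 2)) ?_ ?_ ?_
    · simpa using key
    · intro x _
      have e : HasDerivAt (fun x : ℝ => Real.exp (-x ^ 2 / 2)) (Real.exp (-x ^ 2 / 2) * (-x)) x := by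
        have : HasDerivAt (fun x : ℝ => -x ^ 2 / 2) (-x) x := by
          have := ((hasDerivAt_pow 2 x).neg).div_const 2
          convert! this using 1
          norm_num; ring
        exact this.exp
      have := (((hasDerivAt_id x).sub_const t).mul e).neg
      convert! this using 1
      simp only [id]; ring
    · refine ((i2.sub (i1.const_mul t)).sub i0).congr (Filter.Eventually.of_forall fun x => ?_)
      simp; ring
    · have a0 : Filter.Tendsto (fun x : ℝ => x ^ (0:ℝ) * Real.exp (-(1/2) * x ^ 2)) Filter.atTop (nhds 0) :=
        (rpow_mul_exp_neg_mul_sq_isLittleO_exp_neg (b := 1/2) (by norm_num) 0).trans_tendsto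
          (Real.tendsto_exp_neg_atTop_nhds_zero.comp
            (Filter.tendsto_id.const_mul_atTop (by norm_num : (0:ℝ) < 1/2)) |>.congr
              (fun x => by simp))
      have a1 : Filter.Tendsto (fun x : ℝ => x ^ (1:ℝ) * Real.exp (-(1/2) * x ^ 2)) Filter.atTop (nhds 0) :=
        (rpow_mul_exp_neg_mul_sq_isLittleO_exp_neg (b := 1/2) (by norm_num) 1).trans_tendsto
          (Real.tendsto_exp_neg_atTop_nhds_zero.comp
            (Filter.tendsto_id.const_mul_atTop (by norm_num : (0:ℝ) < 1/2)) |>.congr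
              (fun x => by simp))
      have := (a1.sub (a0.const_mul t)).neg
      simp only [mul_zero, sub_zero, neg_zero] at this
      refine this.congr fun x => ?_
      rw [show -x ^ 2 / 2 = -(1/2) * x ^ 2 by ring]
      simp; ring
  have iA : IntegrableOn (fun x => (x * (x - t) - 1) * Real.exp (-x ^ 2 / 2)) (Set.Ioi t) := by
    refine ((i2.sub (i1.const_mul t)).sub i0).congr (Filter.Eventually.of_forall fun x => ?_)
    simp; ring
  have iB : IntegrableOn (fun x => (x ^ 2 - t ^ 2) * Real.exp (-x ^ 2 / 2)) (Set.Ioi t) := by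
    refine (i2.sub (i0.const_mul (t ^ 2))).congr (Filter.Eventually.of_forall fun x => ?_)
    simp; ring
  have iC : IntegrableOn (fun x => Real.exp (-(x - t) ^ 2 / 2)) (Set.Ioi t) := by
    have := (integ_aux 0).comp_sub_right t
    simp only [pow_zero, one_mul] at this
    exact this.integrableOn
  calc ∫ x in Set.Ioi t, (x ^ 2 - t ^ 2) * Real.exp (-x ^ 2 / 2)
      ≤ ∫ x in Set.Ioi t, (2 * ((x * (x - t) - 1) * Real.exp (-x ^ 2 / 2)) +
          2 * Real.exp (-t ^ 2 / 2) * Real.exp (-(x - t) ^ 2 / 2)) := by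
        refine setIntegral_mono_on iB ((iA.const_mul 2).add (iC.const_mul _)) measurableSet_Ioi ?_
        intro x hx
        have hx : t < x := hx
        rw [mul_assoc 2 (Real.exp _), ← Real.exp_add]
        have h1 : Real.exp (-x ^ 2 / 2) ≤ Real.exp (-t ^ 2 / 2 + -(x - t) ^ 2 / 2) := by
          apply Real.exp_le_exp.2
          nlinarith
        have h2 := Real.exp_pos (-x ^ 2 / 2)
        nlinarith [mul_nonneg (sq_nonneg (x - t)) h2.le]
    _ = √(2 * Real.pi) * Real.exp (-t ^ 2 / 2) := by
        rw [integral_add (iA.const_mul 2) (iC.const_mul _), integral_const_mul,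
          integral_const_mul, ftc, shift_aux]
        ring

lemma integrable_max_aux (T : ℝ) :
    Integrable (fun x : ℝ => max (x ^ 2 - T) 0) (gaussianReal 0 1) := by
  have h : Integrable (fun x : ℝ => x ^ 2) (gaussianReal 0 1) := by
    have := (memLp_id_gaussianReal (μ := 0) (v := 1) 2).integrable_sq
    simpa using this
  exact (h.sub (integrable_const T)).sup (integrable_const 0)

lemma tail_aux (T : ℝ) (hT : 0 ≤ T) :
    ∫ x, max (x ^ 2 - T) 0 ∂(gaussianReal 0 1) ≤ 2 * Real.exp (-T / 2) := by
  obtain ⟨t, ht, rfl⟩ : ∃ t : ℝ, 0 ≤ t ∧ t ^ 2 = T := ⟨√T, Real.sqrt_nonneg _, Real.sq_sqrt hT⟩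
  rw [integral_gaussianReal_eq_integral_smul (by norm_num)]
  have h1 : (∫ x : ℝ, gaussianPDFReal 0 1 x • max (x ^ 2 - t ^ 2) 0) =
      (√(2 * Real.pi))⁻¹ * ∫ x : ℝ, (fun y => max (y ^ 2 - t ^ 2) 0 * Real.exp (-y ^ 2 / 2)) |x| := by
    rw [← integral_const_mul]
    congr 1; funext x
    simp [gaussianPDFReal]; ring
  have h2 : ∫ x in Set.Ioi (0:ℝ), max (x ^ 2 - t ^ 2) 0 * Real.exp (-x ^ 2 / 2) =
      ∫ x in Set.Ioi t, (x ^ 2 - t ^ 2) * Real.exp (-x ^ 2 / 2) := by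
    rw [setIntegral_eq_of_subset_of_forall_sdiff_eq_zero measurableSet_Ioi
      (Set.Ioi_subset_Ioi ht)]
    · refine setIntegral_congr_fun measurableSet_Ioi fun x hx => ?_
      have hx : t < x := hx
      rw [max_eq_left (by nlinarith)]
    · intro x hx
      have h0 : 0 < x := hx.1
      have h3 : x ≤ t := not_lt.1 hx.2
      rw [max_eq_right (by nlinarith), zero_mul]
  have h4 := integral_comp_abs (f := fun y : ℝ => max (y ^ 2 - t ^ 2) 0 * Real.exp (-y ^ 2 / 2))
  rw [h1, h4, h2]
  have hpos : 0 < √(2 * Real.pi) := by positivity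
  rw [inv_mul_le_iff₀ hpos]
  linarith [half_aux t ht]



/-- Bound (eq. (31)) on `E(Δ₀₂)` for random simplex weights over `𝓜_γ`:
`E(Δ₀₂) ≤ 4σ²γ²ν_r⁻² n p^{-δ}`. -/
theorem expectation_Delta02_bound
    {n m p r : ℕ} (hp : 2 ≤ p) (hmn : m ≤ n)
    (A : Matrix (Fin n) (Fin m) ℝ) (hrank : A.rank = m)
    (Φ : Matrix (Fin m) (Fin p) ℝ) (hΦnorm : ∀ j, sqnorm (colv Φ j) = 1)
    (σ : ℝ) (hσ : 0 < σ) (δ : ℝ) (hδ : 0 < δ) (γ : ℝ) (hγ : 0 < γ)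
    (ν2 : ℝ) (hν2 : 0 < ν2)
    (hν2min : ∀ x : Fin p → ℝ, x ≠ 0 → sparse r x → ν2 * sqnorm x ≤ sqnorm (Φ.mulVec x))
    {Ω : Type*} [MeasurableSpace Ω] (μ : Measure Ω) [IsProbabilityMeasure μ]
    (ε : Ω → Fin n → ℝ) (hεmeas : Measurable ε)
    (hεdist : Measure.map ε μ = Measure.pi fun _ : Fin n => gaussianReal 0 1)
    (θhat : Ω → Finset (Fin p) → ℝ)
    (hθmeas : ∀ M : Finset (Fin p), Measurable fun ω => θhat ω M)
    (hθnn : ∀ ω, ∀ M ∈ modelsG r A Φ γ, 0 ≤ θhat ω M)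
    (hθsum : ∀ ω, ∑ M ∈ modelsG r A Φ γ, θhat ω M = 1) :
    ∫ ω,
        (2 * σ ^ 2 / ν2 * ∑ M ∈ modelsG r A Φ γ,
          θhat ω M *
            (sqnorm ((restr (Psi A Φ) M)ᵀ.mulVec (ε ω)) -
              2 * (δ + 1) * Real.log p * frob2 (restr (Psi A Φ) M))) ∂μ ≤
      4 * σ ^ 2 * γ ^ 2 / ν2 * (n : ℝ) * (p : ℝ) ^ (-δ) := by
  classical
  set P := Psi A Φ with hP
  set T : ℝ := 2 * (δ + 1) * Real.log p with hT
  have hp1 : (1:ℝ) < p := by exact_mod_cast hp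
  have hlog : 0 < Real.log p := Real.log_pos hp1
  have hT0 : 0 ≤ T := by positivity
  let g : Fin p → (Fin n → ℝ) → ℝ := fun j e => ∑ i, (P i j / √(sqnorm (colv P j))) * e i
  let w : Fin p → (Fin n → ℝ) → ℝ := fun j e => max ((g j e) ^ 2 - T) 0
  have hs0 : ∀ j, 0 ≤ sqnorm (colv P j) := fun j => Finset.sum_nonneg fun i _ => sq_nonneg _
  have hw0 : ∀ j e, 0 ≤ w j e := fun j e => le_max_right _ _
  have hgm : ∀ j, Measurable (g j) := fun j => by
    show Measurable (fun e : Fin n → ℝ => ∑ i, (P i j / √(sqnorm (colv P j))) * e i)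
    fun_prop
  have hexp : Real.exp (-T / 2) = (p:ℝ) ^ (-(δ + 1)) := by
    rw [Real.rpow_def_of_pos (by linarith)]
    congr 1; rw [hT]; ring
  -- moments
  have hw : ∀ j, Integrable (fun ω => w j (ε ω)) μ ∧
      ∫ ω, w j (ε ω) ∂μ ≤ 2 * Real.exp (-T / 2) := by
    intro j
    by_cases hz : sqnorm (colv P j) = 0
    · have : ∀ e, w j e = 0 := by
        intro e
        simp only [w, g, hz, Real.sqrt_zero, div_zero, zero_mul, Finset.sum_const_zero]
        exact max_eq_right (by linarith)
      simp only [this]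
      refine ⟨integrable_const 0, ?_⟩
      simp only [integral_zero]
      positivity
    · have hc : ∑ i, (P i j / √(sqnorm (colv P j))) ^ 2 = 1 := by
        simp only [div_pow, Real.sq_sqrt (hs0 j)]
        rw [← Finset.sum_div]
        exact div_self hz
      have hlaw : Measure.map (fun ω => g j (ε ω)) μ = gaussianReal 0 1 := by
        rw [← law_aux _ hc, ← hεdist, Measure.map_map (hgm j) hεmeas]
        rfl
      have hgε : AEMeasurable (fun ω => g j (ε ω)) μ := ((hgm j).comp hεmeas).aemeasurable
      have hi := integrable_max_aux T
      have hb := tail_aux T hT0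
      rw [← hlaw] at hi hb
      rw [integral_map hgε hi.aestronglyMeasurable] at hb
      exact ⟨hi.comp_aemeasurable hgε, hb⟩
  -- pointwise
  have hfrob : ∀ M : Finset (Fin p), frob2 (restr P M) = ∑ j ∈ M, sqnorm (colv P j) := by
    intro M
    rw [frob2, ← Finset.sum_filter_add_sum_filter_not Finset.univ (· ∈ M)]
    rw [Finset.sum_eq_zero (s := Finset.univ.filter (¬ · ∈ M)), add_zero]
    · simp only [Finset.filter_univ_mem]
      exact Finset.sum_congr rfl fun j hj => by simp [sqnorm, colv, restr, hj]
    · intro j hj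
      have : j ∉ M := by simpa using hj
      simp [sqnorm, colv, restr, this]
  have hg2 : ∀ j e, (∑ i, P i j * e i) ^ 2 = sqnorm (colv P j) * (g j e) ^ 2 := by
    intro j e
    by_cases hz : sqnorm (colv P j) = 0
    · have h0 : ∀ i, P i j = 0 := by
        intro i
        have := (Finset.sum_eq_zero_iff_of_nonneg (fun i _ => sq_nonneg _)).1 hz i (Finset.mem_univ i)
        exact pow_eq_zero_iff (two_ne_zero) |>.1 this
      simp [h0, hz]
    · have : g j e = (∑ i, P i j * e i) / √(sqnorm (colv P j)) := by
        simp only [g]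
        rw [Finset.sum_div]
        exact Finset.sum_congr rfl fun i _ => by ring
      rw [this, div_pow, Real.sq_sqrt (hs0 j)]
      field_simp
  have hmul : ∀ (M : Finset (Fin p)) e, sqnorm ((restr P M)ᵀ.mulVec e) =
      ∑ j ∈ M, sqnorm (colv P j) * (g j e) ^ 2 := by
    intro M e
    rw [sqnorm, ← Finset.sum_filter_add_sum_filter_not Finset.univ (· ∈ M)]
    rw [Finset.sum_eq_zero (s := Finset.univ.filter (¬ · ∈ M)), add_zero]
    · simp only [Finset.filter_univ_mem]
      refine Finset.sum_congr rfl fun j hj => ?_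
      rw [← hg2]
      simp [Matrix.mulVec, dotProduct, restr, hj]
    · intro j hj
      have : j ∉ M := by simpa using hj
      simp [Matrix.mulVec, dotProduct, restr, this]
  have hM : ∀ M ∈ modelsG r A Φ γ, ∀ e,
      sqnorm ((restr P M)ᵀ.mulVec e) - T * frob2 (restr P M) ≤
        γ ^ 2 * n * ∑ j, w j e := by
    intro M hMm e
    have hle : frob2 (restr P M) ≤ γ ^ 2 * n := by
      simp only [modelsG, Finset.mem_filter] at hMm
      exact hMm.2.2
    have hW : 0 ≤ ∑ j, w j e := Finset.sum_nonneg fun j _ => hw0 j e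
    calc sqnorm ((restr P M)ᵀ.mulVec e) - T * frob2 (restr P M)
        = ∑ j ∈ M, sqnorm (colv P j) * ((g j e) ^ 2 - T) := by
          rw [hmul, hfrob, Finset.mul_sum, ← Finset.sum_sub_distrib]
          exact Finset.sum_congr rfl fun j _ => by ring
      _ ≤ ∑ j ∈ M, sqnorm (colv P j) * ∑ k, w k e := by
          refine Finset.sum_le_sum fun j _ => mul_le_mul_of_nonneg_left ?_ (hs0 j)
          exact (le_max_left _ _).trans
            (Finset.single_le_sum (f := fun k => w k e) (fun k _ => hw0 k e) (Finset.mem_univ j))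
      _ = frob2 (restr P M) * ∑ k, w k e := by rw [hfrob, Finset.sum_mul]
      _ ≤ _ := mul_le_mul_of_nonneg_right hle hW
  have hpt : ∀ ω, (2 * σ ^ 2 / ν2 * ∑ M ∈ modelsG r A Φ γ,
          θhat ω M * (sqnorm ((restr P M)ᵀ.mulVec (ε ω)) - T * frob2 (restr P M))) ≤
        2 * σ ^ 2 / ν2 * (γ ^ 2 * n * ∑ j, w j (ε ω)) := by
    intro ω
    refine mul_le_mul_of_nonneg_left ?_ (by positivity)
    calc _ ≤ ∑ M ∈ modelsG r A Φ γ, θhat ω M * (γ ^ 2 * n * ∑ j, w j (ε ω)) :=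
          Finset.sum_le_sum fun M hMm =>
            mul_le_mul_of_nonneg_left (hM M hMm (ε ω)) (hθnn ω M hMm)
      _ = _ := by rw [← Finset.sum_mul, hθsum, one_mul]
  have hint : Integrable (fun ω => 2 * σ ^ 2 / ν2 * (γ ^ 2 * n * ∑ j, w j (ε ω))) μ :=
    ((integrable_finsetSum _ fun j _ => (hw j).1).const_mul _).const_mul _
  have hbound : ∫ ω, 2 * σ ^ 2 / ν2 * (γ ^ 2 * n * ∑ j, w j (ε ω)) ∂μ ≤
      4 * σ ^ 2 * γ ^ 2 / ν2 * (n : ℝ) * (p : ℝ) ^ (-δ) := by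
    rw [integral_const_mul, integral_const_mul, integral_finsetSum _ fun j _ => (hw j).1]
    have h1 : ∑ j, ∫ ω, w j (ε ω) ∂μ ≤ 2 * (p:ℝ) ^ (-δ) := by
      calc _ ≤ ∑ _j : Fin p, 2 * Real.exp (-T / 2) := Finset.sum_le_sum fun j _ => (hw j).2
        _ = 2 * ((p:ℝ) ^ (1:ℝ) * (p:ℝ) ^ (-(δ + 1))) := by
          rw [hexp, Real.rpow_one]; simp; ring
        _ = _ := by
          rw [← Real.rpow_add (by linarith)]
          congr 2; ring
    calc _ ≤ 2 * σ ^ 2 / ν2 * (γ ^ 2 * n * (2 * (p:ℝ) ^ (-δ))) := by gcongr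
      _ = _ := by ring
  by_cases hI : Integrable (fun ω => 2 * σ ^ 2 / ν2 * ∑ M ∈ modelsG r A Φ γ,
          θhat ω M * (sqnorm ((restr P M)ᵀ.mulVec (ε ω)) - T * frob2 (restr P M))) μ
  · exact (integral_mono hI hint hpt).trans hbound
  · rw [integral_undef hI]
    positivity
end
end
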